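/- arXiv:math/0603035 — 3 statements merged into one kernel-verified Lean document; each statement's English description precedes it below -/
import Mathlib

section
/- Let d ≥ 1 and let Ω ⊆ ℝ^d be a box, i.e. a product of d open intervals (bounded or not). Let (f_ε)_{ε∈(0,1]} be a net of smooth functions f_ε : Ω → ℂ such that μ_{q,l}(f_ε) < +∞ for all q, l ∈ ℕ and such that for all q, l ∈ ℕ there exists N ∈ ℕ with μ_{q,l}(f_ε) = O(ε^{-N}) as ε → 0 (i.e. (f_ε) ∈ E_S(Ω)). If for all q ∈ ℕ and all p ∈ ℕ one has μ_{q,0}(f_ε) = O(ε^p) as ε → 0, then for all q, l ∈ ℕ and all p ∈ ℕ one has μ_{q,l}(f_ε) = O(ε^p) as ε → 0. In other words, N_S(Ω) = N_{S,*}(Ω) ∩ E_S(Ω). -/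
open MeasureTheory Filter

noncomputable def mu {E : Type*} [NormedAddCommGroup E] [NormedSpace ℝ E]
    (r : ℤ) (l : ℕ) (f : E → ℂ) : ENNReal :=
  ⨆ (x : E) (i : ℕ) (_ : i ≤ l),
    ENNReal.ofReal ((1 + ‖x‖) ^ r * ‖iteratedFDeriv ℝ i f x‖)

def IsOEps (g : ℝ → ENNReal) (h : ℝ → ℝ) : Prop :=
  ∃ C > (0:ℝ), ∃ η > (0:ℝ), ∀ ε : ℝ, 0 < ε → ε ≤ η → g ε ≤ ENNReal.ofReal (C * h ε)

def SchwartzLike {E : Type*} [NormedAddCommGroup E] [NormedSpace ℝ E] (f : E → ℂ) : Prop :=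
  ContDiff ℝ (⊤ : ℕ∞) f ∧ ∀ q l : ℕ, mu (q : ℤ) l f < ⊤

def TemperateGrowth' {E : Type*} [NormedAddCommGroup E] [NormedSpace ℝ E] (f : E → ℂ) : Prop :=
  ContDiff ℝ (⊤ : ℕ∞) f ∧ ∀ l : ℕ, ∃ q : ℕ, mu (-(q:ℤ)) l f < ⊤

def IsESNet {E : Type*} [NormedAddCommGroup E] [NormedSpace ℝ E] (f : ℝ → E → ℂ) : Prop :=
  (∀ ε ∈ Set.Ioc (0:ℝ) 1, SchwartzLike (f ε)) ∧
  ∀ q l : ℕ, ∃ N : ℕ, IsOEps (fun ε => mu (q:ℤ) l (f ε)) (fun ε => ε ^ (-(N:ℤ)))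

def IsNSNet {E : Type*} [NormedAddCommGroup E] [NormedSpace ℝ E] (f : ℝ → E → ℂ) : Prop :=
  (∀ ε ∈ Set.Ioc (0:ℝ) 1, SchwartzLike (f ε)) ∧
  ∀ q l p : ℕ, IsOEps (fun ε => mu (q:ℤ) l (f ε)) (fun ε => ε ^ p)

def IsEtauNet {E : Type*} [NormedAddCommGroup E] [NormedSpace ℝ E] (f : ℝ → E → ℂ) : Prop :=
  (∀ ε ∈ Set.Ioc (0:ℝ) 1, TemperateGrowth' (f ε)) ∧
  ∀ l : ℕ, ∃ q N : ℕ, IsOEps (fun ε => mu (-(q:ℤ)) l (f ε)) (fun ε => ε ^ (-(N:ℤ)))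

def IsNtauNet {E : Type*} [NormedAddCommGroup E] [NormedSpace ℝ E] (f : ℝ → E → ℂ) : Prop :=
  (∀ ε ∈ Set.Ioc (0:ℝ) 1, TemperateGrowth' (f ε)) ∧
  ∀ l : ℕ, ∃ q : ℕ, ∀ p : ℕ, IsOEps (fun ε => mu (-(q:ℤ)) l (f ε)) (fun ε => ε ^ p)

noncomputable def scaled {d : ℕ} (ρ : (Fin d → ℝ) → ℂ) (t : ℝ) (x : Fin d → ℝ) : ℂ :=
  ((t ^ (-(d:ℤ)) : ℝ) : ℂ) * ρ (t⁻¹ • x)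

def IsMollifier {d : ℕ} (ρ : SchwartzMap (Fin d → ℝ) ℂ) : Prop :=
  (∫ x : Fin d → ℝ, ρ x) = 1 ∧
  ∀ α : Fin d → ℕ, α ≠ 0 → (∫ x : Fin d → ℝ, (∏ j, (x j : ℂ) ^ (α j)) * ρ x) = 0

def MemLa (a : ℝ) (N : ℕ → ℝ) : Prop :=
  (∀ l, 0 ≤ N l) ∧
  ((a = 0 ∧ Filter.Tendsto (fun l : ℕ => N l / (l:ℝ)) Filter.atTop (nhds 0)) ∨
   (0 < a ∧ Filter.limsup (fun l : ℕ => N l / (l:ℝ)) Filter.atTop < a))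

def IsESLNet {E : Type*} [NormedAddCommGroup E] [NormedSpace ℝ E]
    (a : ℝ) (f : ℝ → E → ℂ) : Prop :=
  (∀ ε ∈ Set.Ioc (0:ℝ) 1, SchwartzLike (f ε)) ∧
  ∃ N : ℕ → ℝ, MemLa a N ∧
    ∀ q l : ℕ, IsOEps (fun ε => mu (q:ℤ) l (f ε)) (fun ε => ε ^ (-(N l)))

def IsEtauLNet {E : Type*} [NormedAddCommGroup E] [NormedSpace ℝ E]
    (c : ℝ) (f : ℝ → E → ℂ) : Prop :=
  (∀ ε ∈ Set.Ioc (0:ℝ) 1, TemperateGrowth' (f ε)) ∧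
  ∃ N : ℕ → ℝ, MemLa c N ∧ ∃ q : ℕ, ∀ l : ℕ,
    IsOEps (fun ε => mu (-(q:ℤ)) l (f ε)) (fun ε => ε ^ (-(N l)))

def IsESinfNet {E : Type*} [NormedAddCommGroup E] [NormedSpace ℝ E] (f : ℝ → E → ℂ) : Prop :=
  (∀ ε ∈ Set.Ioc (0:ℝ) 1, SchwartzLike (f ε)) ∧
  ∃ N : ℕ, ∀ q l : ℕ, IsOEps (fun ε => mu (q:ℤ) l (f ε)) (fun ε => ε ^ (-(N:ℤ)))

def ModerateNetMaps (m n : ℕ)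
    (L : ℝ → SchwartzMap (Fin n → ℝ) ℂ → ((Fin m → ℝ) → ℂ)) : Prop :=
  (∀ ε ∈ Set.Ioc (0:ℝ) 1, ∀ f, TemperateGrowth' (L ε f)) ∧
  ∀ l : ℕ, ∃ C : ℝ → ℝ, (∀ ε, 0 ≤ C ε) ∧
    (∃ N : ℕ, ∃ C₀ > (0:ℝ), ∃ η > (0:ℝ), ∀ ε : ℝ, 0 < ε → ε ≤ η → C ε ≤ C₀ * ε ^ (-(N:ℤ))) ∧
    ∃ p q l' : ℕ, ∃ η > (0:ℝ), ∀ ε : ℝ, 0 < ε → ε ≤ η →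
      ∀ f : SchwartzMap (Fin n → ℝ) ℂ,
        mu (-(p:ℤ)) l (L ε f) ≤ ENNReal.ofReal (C ε) * mu (q:ℤ) l' ⇑f

def NegligibleNetMaps (m n : ℕ)
    (L : ℝ → SchwartzMap (Fin n → ℝ) ℂ → ((Fin m → ℝ) → ℂ)) : Prop :=
  (∀ ε ∈ Set.Ioc (0:ℝ) 1, ∀ f, TemperateGrowth' (L ε f)) ∧
  ∀ l : ℕ, ∃ C : ℝ → ℝ, (∀ ε, 0 ≤ C ε) ∧
    (∀ p' : ℕ, ∃ C₀ > (0:ℝ), ∃ η > (0:ℝ), ∀ ε : ℝ, 0 < ε → ε ≤ η → C ε ≤ C₀ * ε ^ p') ∧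
    ∃ p q l' : ℕ, ∃ η > (0:ℝ), ∀ ε : ℝ, 0 < ε → ε ≤ η →
      ∀ f : SchwartzMap (Fin n → ℝ) ℂ,
        mu (-(p:ℤ)) l (L ε f) ≤ ENNReal.ofReal (C ε) * mu (q:ℤ) l' ⇑f

def StronglyModerateWith (m n : ℕ)
    (L : ℝ → SchwartzMap (Fin n → ℝ) ℂ → ((Fin m → ℝ) → ℂ))
    (lam : ℕ → ℕ) (r : ℕ → ℝ) : Prop :=
  (∀ ε ∈ Set.Ioc (0:ℝ) 1, ∀ f, TemperateGrowth' (L ε f)) ∧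
  (∀ l, 0 ≤ r l) ∧
  ∀ l : ℕ, ∃ C ≥ (0:ℝ), ∃ p q : ℕ, ∃ η > (0:ℝ), ∀ ε : ℝ, 0 < ε → ε ≤ η →
    ∀ f : SchwartzMap (Fin n → ℝ) ℂ,
      mu (-(p:ℤ)) l (L ε f) ≤ ENNReal.ofReal (C * ε ^ (-(r l))) * mu (q:ℤ) (lam l) ⇑f

def ContinuousIntoOM (m n : ℕ) (L : SchwartzMap (Fin n → ℝ) ℂ → ((Fin m → ℝ) → ℂ)) : Prop :=
  ∀ l : ℕ, ∃ C ≥ (0:ℝ), ∃ p q l' : ℕ, ∀ f,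
    mu (-(p:ℤ)) l (L f) ≤ ENNReal.ofReal C * mu (q:ℤ) l' ⇑f

noncomputable def muOn {d : ℕ} (Ω : Set (Fin d → ℝ)) (r : ℤ) (l : ℕ)
    (f : (Fin d → ℝ) → ℂ) : ENNReal :=
  ⨆ (x : Ω) (i : ℕ) (_ : i ≤ l),
    ENNReal.ofReal ((1 + ‖(x : Fin d → ℝ)‖) ^ r * ‖iteratedFDerivWithin ℝ i f Ω (x : Fin d → ℝ)‖)

def IsBox {d : ℕ} (Ω : Set (Fin d → ℝ)) : Prop :=
  ∃ I : Fin d → Set ℝ, (∀ j, IsOpen (I j) ∧ Convex ℝ (I j)) ∧ Ω = Set.univ.pi I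

def IsRegularSet (R : Set (ℕ → ℝ)) : Prop :=
  R.Nonempty ∧ (∀ N ∈ R, ∀ n, 0 ≤ N n) ∧
  (∀ N ∈ R, ∀ k : ℕ, ∃ N' ∈ R, ∀ n, N n + k ≤ N' n) ∧
  (∀ N₁ ∈ R, ∀ N₂ ∈ R, ∃ N ∈ R, ∀ n, max (N₁ n) (N₂ n) ≤ N n) ∧
  (∀ N₁ ∈ R, ∀ N₂ ∈ R, ∃ N ∈ R, ∀ l₁ l₂ : ℕ, N₁ l₁ + N₂ l₂ ≤ N (l₁ + l₂))

def IsESRNet {E : Type*} [NormedAddCommGroup E] [NormedSpace ℝ E]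
    (R : Set (ℕ → ℝ)) (f : ℝ → E → ℂ) : Prop :=
  (∀ ε ∈ Set.Ioc (0:ℝ) 1, SchwartzLike (f ε)) ∧
  ∃ N ∈ R, ∀ q l : ℕ, IsOEps (fun ε => mu (q:ℤ) l (f ε)) (fun ε => ε ^ (-(N l)))

def IsEtauRNet {E : Type*} [NormedAddCommGroup E] [NormedSpace ℝ E]
    (R : Set (ℕ → ℝ)) (f : ℝ → E → ℂ) : Prop :=
  (∀ ε ∈ Set.Ioc (0:ℝ) 1, TemperateGrowth' (f ε)) ∧
  ∃ N ∈ R, ∃ q : ℕ, ∀ l : ℕ,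
    IsOEps (fun ε => mu (-(q:ℤ)) l (f ε)) (fun ε => ε ^ (-(N l)))

noncomputable def pderiv' {d : ℕ} (j : Fin d) (f : (Fin d → ℝ) → ℂ) : (Fin d → ℝ) → ℂ :=
  fun x => fderiv ℝ f x (Pi.single j 1)

noncomputable def multiDeriv {d : ℕ} : List (Fin d) → ((Fin d → ℝ) → ℂ) → ((Fin d → ℝ) → ℂ)
  | [], f => f
  | j :: js, f => pderiv' j (multiDeriv js f)

/-!
The argument is a Landau interpolation inequality. Write `φ` for the derivative of `D^i f` at `x`.
Taylor's formula bounds `φ (z - x)` for every `z ∈ Ω` near `x` by the sizes of `D^i f` and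
`D^(i+2) f`. A convex set with an interior point contains, within `t (1 + ‖x‖)` of its point `x`, a
ball of radius proportional to `t`; subtracting the bounds at two points of this ball bounds `φ` on
a ball around `0`, hence `‖φ‖`. In weighted seminorms this reads
`μ_{r,l+1}(f) ≤ K (μ_{r,l}(f) / t + t μ_{r+2,l+2}(f))` for `0 < t ≤ 1`. Taking for `t` a high power
of `ε`, moderateness in order `l + 2` and negligibility in order `l` give negligibility in order
`l + 1`.
-/

section Weight

variable {E : Type*} [NormedAddCommGroup E]

lemma zpow_le_two_pow_natAbs_mul_zpow {a b : ℝ} (ha : 0 < a) (hb : 0 < b) (hab : a ≤ 2 * b)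
    (hba : b ≤ 2 * a) (r : ℤ) : a ^ r ≤ 2 ^ r.natAbs * b ^ r := by
  obtain ⟨n, rfl | rfl⟩ := r.eq_nat_or_neg
  · rw [Int.natAbs_natCast, zpow_natCast, zpow_natCast, ← mul_pow]
    gcongr
  · rw [Int.natAbs_neg, Int.natAbs_natCast, zpow_neg, zpow_neg, zpow_natCast, zpow_natCast,
      ← div_eq_mul_inv, le_div_iff₀ (by positivity), inv_mul_le_iff₀ (by positivity), ← mul_pow]
    gcongr
    rwa [mul_comm]

lemma one_add_norm_zpow_le_of_mem_closedBall {x z : E}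
    (hz : z ∈ Metric.closedBall x ((1 + ‖x‖) / 2)) (r : ℤ) :
    (1 + ‖x‖) ^ r ≤ 2 ^ r.natAbs * (1 + ‖z‖) ^ r := by
  rw [mem_closedBall_iff_norm] at hz
  have hxz : ‖x‖ ≤ ‖z‖ + ‖z - x‖ := norm_le_norm_add_norm_sub z x
  have hzx : ‖z‖ ≤ ‖x‖ + ‖z - x‖ := norm_le_norm_add_norm_sub' z x
  exact zpow_le_two_pow_natAbs_mul_zpow (by positivity) (by positivity)
    (by linarith) (by linarith [norm_nonneg x]) r

lemma le_div_one_add_norm_zpow {x z : E} (hz : z ∈ Metric.closedBall x ((1 + ‖x‖) / 2))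
    {r : ℤ} {u e : ℝ} (hu : 0 ≤ u) (hue : (1 + ‖z‖) ^ r * u ≤ e) :
    u ≤ 2 ^ r.natAbs * e / (1 + ‖x‖) ^ r := by
  rw [le_div_iff₀ (by positivity), mul_comm]
  calc (1 + ‖x‖) ^ r * u ≤ 2 ^ r.natAbs * (1 + ‖z‖) ^ r * u := by
        gcongr
        exact one_add_norm_zpow_le_of_mem_closedBall hz r
    _ = 2 ^ r.natAbs * ((1 + ‖z‖) ^ r * u) := mul_assoc _ _ _
    _ ≤ 2 ^ r.natAbs * e := by gcongr

end Weight

section Landau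

variable {E F : Type*} [NormedAddCommGroup E] [NormedSpace ℝ E]
  [NormedAddCommGroup F] [NormedSpace ℝ F]

lemma opNorm_le_div_of_forall_mem_closedBall {φ : E →L[ℝ] F} {ρ C : ℝ} (hρ : 0 < ρ) (hC : 0 ≤ C)
    (hφ : ∀ v ∈ Metric.closedBall (0 : E) ρ, ‖φ v‖ ≤ C) : ‖φ‖ ≤ C / ρ := by
  refine φ.opNorm_le_of_unit_norm (by positivity) fun v hv => ?_
  have hρv : ‖φ (ρ • v)‖ ≤ C :=
    hφ _ (by rw [mem_closedBall_zero_iff, norm_smul, hv, mul_one, Real.norm_of_nonneg hρ.le])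
  rwa [map_smul, norm_smul, Real.norm_of_nonneg hρ.le, mul_comm, ← le_div_iff₀ hρ] at hρv

variable {s Ω : Set E} {g : E → F} {g' : E → E →L[ℝ] F} {A L R ρ : ℝ} {x y : E}

lemma norm_hasFDerivWithinAt_apply_sub_le (hs : Convex ℝ s)
    (hg : ∀ z ∈ s, HasFDerivWithinAt g (g' z) s z) (hA : ∀ z ∈ s, ‖g z‖ ≤ A)
    (hL : ∀ z ∈ s, ‖g' z - g' x‖ ≤ L) (hR : s ⊆ Metric.closedBall x R) (hx : x ∈ s)
    (hy : y ∈ s) : ‖g' x (y - x)‖ ≤ 2 * A + L * R := by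
  have hL0 : 0 ≤ L := (norm_nonneg _).trans (hL x hx)
  have htaylor : ‖g y - g x - g' x (y - x)‖ ≤ L * R :=
    (hs.norm_image_sub_le_of_norm_hasFDerivWithin_le' hg hL hx hy).trans
      (by gcongr; exact mem_closedBall_iff_norm.1 (hR hy))
  calc ‖g' x (y - x)‖ = ‖g y - g x - (g y - g x - g' x (y - x))‖ := by rw [sub_sub_cancel]
    _ ≤ ‖g y‖ + ‖g x‖ + ‖g y - g x - g' x (y - x)‖ :=
        (norm_sub_le _ _).trans (by gcongr; exact norm_sub_le _ _)
    _ ≤ A + A + L * R := by gcongr; exacts [hA y hy, hA x hx]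
    _ = 2 * A + L * R := by ring

lemma norm_hasFDerivWithinAt_le_of_closedBall_subset (hs : Convex ℝ s)
    (hg : ∀ z ∈ s, HasFDerivWithinAt g (g' z) s z) (hA : ∀ z ∈ s, ‖g z‖ ≤ A)
    (hL : ∀ z ∈ s, ‖g' z - g' x‖ ≤ L) (hR : s ⊆ Metric.closedBall x R) (hx : x ∈ s)
    (hρ : 0 < ρ) (hy : Metric.closedBall y ρ ⊆ s) :
    ‖g' x‖ ≤ 2 * (2 * A + L * R) / ρ := by
  have hincr : ∀ z ∈ s, ‖g' x (z - x)‖ ≤ 2 * A + L * R := fun z hz =>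
    norm_hasFDerivWithinAt_apply_sub_le hs hg hA hL hR hx hz
  have hbound : 0 ≤ 2 * A + L * R := (norm_nonneg _).trans (hincr x hx)
  refine opNorm_le_div_of_forall_mem_closedBall hρ (by positivity) fun v hv => ?_
  have hyv : y + v ∈ s := hy (by simpa using hv)
  have hys : y ∈ s := hy (Metric.mem_closedBall_self hρ.le)
  calc ‖g' x v‖ = ‖g' x (y + v - x) - g' x (y - x)‖ := by rw [← map_sub]; congr 2; abel
    _ ≤ ‖g' x (y + v - x)‖ + ‖g' x (y - x)‖ := norm_sub_le _ _
    _ ≤ 2 * (2 * A + L * R) := by linarith [hincr _ hyv, hincr _ hys]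

lemma norm_fderivWithin_iteratedFDerivWithin_sub {f : E → F} {i : ℕ} :
    ‖fderivWithin ℝ (iteratedFDerivWithin ℝ i f Ω) Ω y -
        fderivWithin ℝ (iteratedFDerivWithin ℝ i f Ω) Ω x‖ =
      ‖iteratedFDerivWithin ℝ (i + 1) f Ω y - iteratedFDerivWithin ℝ (i + 1) f Ω x‖ := by
  rw [iteratedFDerivWithin_succ_eq_comp_left, Function.comp_apply, Function.comp_apply,
    ← dist_eq_norm, LinearIsometryEquiv.dist_map, dist_eq_norm]

lemma norm_iteratedFDerivWithin_succ_le_of_closedBall_subset (hΩ : Convex ℝ Ω)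
    (hΩd : UniqueDiffOn ℝ Ω) {f : E → F} {i : ℕ} (hf : ContDiffOn ℝ (i + 2) f Ω) {B : ℝ}
    (hA : ∀ z ∈ Ω ∩ Metric.closedBall x R, ‖iteratedFDerivWithin ℝ i f Ω z‖ ≤ A)
    (hB : ∀ z ∈ Ω ∩ Metric.closedBall x R, ‖iteratedFDerivWithin ℝ (i + 2) f Ω z‖ ≤ B)
    (hx : x ∈ Ω) (hR : 0 ≤ R) (hρ : 0 < ρ)
    (hy : Metric.closedBall y ρ ⊆ Ω ∩ Metric.closedBall x R) :
    ‖iteratedFDerivWithin ℝ (i + 1) f Ω x‖ ≤ 2 * (2 * A + B * R ^ 2) / ρ := by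
  have hconv : Convex ℝ (Ω ∩ Metric.closedBall x R) := hΩ.inter (convex_closedBall x R)
  have hxs : x ∈ Ω ∩ Metric.closedBall x R := ⟨hx, Metric.mem_closedBall_self hR⟩
  have hB0 : 0 ≤ B := (norm_nonneg _).trans (hB x hxs)
  have hderiv : ∀ k < i + 2, ∀ z ∈ Ω ∩ Metric.closedBall x R,
      HasFDerivWithinAt (iteratedFDerivWithin ℝ k f Ω)
        (fderivWithin ℝ (iteratedFDerivWithin ℝ k f Ω) Ω z) (Ω ∩ Metric.closedBall x R) z :=
    fun k hk z hz =>
      (hf.differentiableOn_iteratedFDerivWithin (by exact_mod_cast hk) hΩd z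
        hz.1).hasFDerivWithinAt.mono Set.inter_subset_left
  have hosc : ∀ z ∈ Ω ∩ Metric.closedBall x R,
      ‖fderivWithin ℝ (iteratedFDerivWithin ℝ i f Ω) Ω z -
        fderivWithin ℝ (iteratedFDerivWithin ℝ i f Ω) Ω x‖ ≤ B * R := by
    intro z hz
    rw [norm_fderivWithin_iteratedFDerivWithin_sub]
    exact (hconv.norm_image_sub_le_of_norm_hasFDerivWithin_le (hderiv (i + 1) (by omega))
      (fun w hw => norm_fderivWithin_iteratedFDerivWithin.trans_le (hB w hw)) hxs hz).trans
      (by gcongr; exact mem_closedBall_iff_norm.1 hz.2)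
  rw [← norm_fderivWithin_iteratedFDerivWithin, sq, ← mul_assoc B]
  exact norm_hasFDerivWithinAt_le_of_closedBall_subset hconv (hderiv i (by omega)) hA hosc
    Set.inter_subset_right hxs hρ hy

lemma exists_eq_add_smul_sub_of_mem_closedBall {a x z : E} {r s : ℝ} (hs : 0 < s)
    (hz : z ∈ Metric.closedBall (x + s • (a - x)) (s * r)) :
    ∃ b ∈ Metric.closedBall a r, z = x + s • (b - x) := by
  have hsub : x + s⁻¹ • (z - x) - a = s⁻¹ • (z - (x + s • (a - x))) := by
    rw [← sub_sub, smul_sub s⁻¹ (z - x), inv_smul_smul₀ hs.ne']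
    abel
  refine ⟨x + s⁻¹ • (z - x), ?_, by simp [hs.ne']⟩
  rw [mem_closedBall_iff_norm] at hz
  rwa [mem_closedBall_iff_norm, hsub, norm_smul, Real.norm_of_nonneg (by positivity),
    inv_mul_le_iff₀ hs]

-- Contract a fixed ball of `Ω` towards `x` by a factor proportional to `t`. Its distance to `x`
-- grows with `‖x‖`, which costs a power of the weight in the Landau inequality.
lemma exists_closedBall_subset_inter_closedBall_of_convex (hΩ : Convex ℝ Ω)
    (hint : (interior Ω).Nonempty) :
    ∃ c > (0 : ℝ), ∀ x ∈ Ω, ∀ t ∈ Set.Ioc (0 : ℝ) 1, ∃ y,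
      Metric.closedBall y (c * t) ⊆ Ω ∩ Metric.closedBall x (t * ((1 + ‖x‖) / 2)) := by
  obtain ⟨a, ha⟩ := hint
  obtain ⟨r, hr, hball⟩ := Metric.nhds_basis_closedBall.mem_iff.1 (mem_interior_iff_mem_nhds.1 ha)
  set M : ℝ := 1 + ‖a‖ + r with hM
  have hM0 : 0 < M := by positivity
  refine ⟨r / (2 * M), by positivity, fun x hx t ht => ?_⟩
  set s : ℝ := t / (2 * M) with hs
  have hs0 : 0 < s := div_pos ht.1 (by positivity)
  have hs1 : s ≤ 1 := by
    rw [hs, div_le_one (by positivity)]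
    linarith [ht.2, norm_nonneg a]
  refine ⟨x + s • (a - x), fun z hz => ?_⟩
  have hradius : r / (2 * M) * t = s * r := by rw [hs]; ring
  obtain ⟨b, hb, rfl⟩ := exists_eq_add_smul_sub_of_mem_closedBall hs0 (hradius ▸ hz)
  refine ⟨hΩ.add_smul_sub_mem hx (hball hb) ⟨hs0.le, hs1⟩, ?_⟩
  have hbx : ‖b - x‖ ≤ M * (1 + ‖x‖) := by
    have hba : ‖b‖ ≤ ‖a‖ + r :=
      (norm_le_norm_add_norm_sub' b a).trans (by gcongr; exact mem_closedBall_iff_norm.1 hb)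
    calc ‖b - x‖ ≤ ‖b‖ + ‖x‖ := norm_sub_le b x
      _ ≤ ‖a‖ + r + ‖x‖ := by gcongr
      _ ≤ M * (1 + ‖x‖) := by
        rw [hM]
        nlinarith [mul_nonneg (add_nonneg (norm_nonneg a) hr.le) (norm_nonneg x)]
  rw [mem_closedBall_iff_norm, add_sub_cancel_left, norm_smul, Real.norm_of_nonneg hs0.le]
  calc s * ‖b - x‖ ≤ s * (M * (1 + ‖x‖)) := by gcongr
    _ = t * ((1 + ‖x‖) / 2) := by rw [hs]; field_simp

lemma exists_zpow_mul_norm_iteratedFDerivWithin_succ_le (hΩ : Convex ℝ Ω)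
    (hint : (interior Ω).Nonempty) (r : ℤ) :
    ∃ K > (0 : ℝ), ∀ (f : E → F) (i : ℕ), ContDiffOn ℝ (i + 2) f Ω → ∀ t ∈ Set.Ioc (0 : ℝ) 1,
      ∀ a b : ℝ, (∀ z ∈ Ω, (1 + ‖z‖) ^ r * ‖iteratedFDerivWithin ℝ i f Ω z‖ ≤ a) →
      (∀ z ∈ Ω, (1 + ‖z‖) ^ (r + 2) * ‖iteratedFDerivWithin ℝ (i + 2) f Ω z‖ ≤ b) →
      ∀ x ∈ Ω, (1 + ‖x‖) ^ r * ‖iteratedFDerivWithin ℝ (i + 1) f Ω x‖ ≤ K * (a / t + b * t) := by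
  obtain ⟨c, hc, hballs⟩ := exists_closedBall_subset_inter_closedBall_of_convex hΩ hint
  set P : ℝ := 2 ^ r.natAbs
  set Q : ℝ := 2 ^ (r + 2).natAbs
  refine ⟨4 * (P + Q) / c, by positivity, fun f i hf t ht a b ha hb x hx => ?_⟩
  obtain ⟨y, hy⟩ := hballs x hx t ht
  have ht0 : 0 < t := ht.1
  have ha0 : 0 ≤ a := le_trans (by positivity) (ha x hx)
  have hb0 : 0 ≤ b := le_trans (by positivity) (hb x hx)
  set w : ℝ := 1 + ‖x‖
  have hw0 : 0 < w := by positivity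
  have hnear : ∀ z ∈ Ω ∩ Metric.closedBall x (t * (w / 2)), z ∈ Metric.closedBall x (w / 2) :=
    fun z hz => Metric.closedBall_subset_closedBall
      (mul_le_of_le_one_left (by positivity) ht.2) hz.2
  have hlandau := norm_iteratedFDerivWithin_succ_le_of_closedBall_subset hΩ
    (uniqueDiffOn_convex hΩ hint) hf
    (fun z hz => le_div_one_add_norm_zpow (hnear z hz) (norm_nonneg _) (ha z hz.1))
    (fun z hz => le_div_one_add_norm_zpow (hnear z hz) (norm_nonneg _) (hb z hz.1))
    hx (by positivity) (by positivity) hy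
  calc w ^ r * ‖iteratedFDerivWithin ℝ (i + 1) f Ω x‖
      ≤ w ^ r *
          (2 * (2 * (P * a / w ^ r) + Q * b / w ^ (r + 2) * (t * (w / 2)) ^ 2) / (c * t)) := by
        gcongr
    _ = (4 * P * (a / t) + Q / 2 * (b * t)) / c := by
        rw [zpow_add₀ hw0.ne', zpow_ofNat]
        field_simp
        ring
    _ ≤ 4 * (P + Q) * (a / t + b * t) / c := by
        gcongr
        have hQa : 0 ≤ Q * (a / t) := by positivity
        have hPQb : 0 ≤ (8 * P + 7 * Q) * (b * t) := by positivity
        linarith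
    _ = 4 * (P + Q) / c * (a / t + b * t) := by ring

/-- The seminorm `μ_{r,l}` of a map on `Ω` between arbitrary real normed spaces, of which `muOn` is
the case of complex-valued functions on `ℝ^d`. As there, the operator norms of the iterated Fréchet
derivatives within `Ω` stand for the partial derivatives. -/
noncomputable def muWithin (Ω : Set E) (r : ℤ) (l : ℕ) (f : E → F) : ENNReal :=
  ⨆ (x : Ω) (i : ℕ) (_ : i ≤ l),
    ENNReal.ofReal ((1 + ‖(x : E)‖) ^ r * ‖iteratedFDerivWithin ℝ i f Ω (x : E)‖)

lemma muWithin_le_ofReal_iff {r : ℤ} {l : ℕ} {f : E → F} {c : ℝ} (hc : 0 ≤ c) :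
    muWithin Ω r l f ≤ ENNReal.ofReal c ↔
      ∀ x ∈ Ω, ∀ i ≤ l, (1 + ‖x‖) ^ r * ‖iteratedFDerivWithin ℝ i f Ω x‖ ≤ c := by
  simp only [muWithin, iSup_le_iff, ENNReal.ofReal_le_ofReal_iff hc, Subtype.forall]

lemma exists_muWithin_succ_le (hΩ : Convex ℝ Ω) (hint : (interior Ω).Nonempty) (r : ℤ) (l : ℕ) :
    ∃ K > (0 : ℝ), ∀ f : E → F, ContDiffOn ℝ (l + 2) f Ω → ∀ t ∈ Set.Ioc (0 : ℝ) 1,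
      ∀ a ≥ (0 : ℝ), ∀ b ≥ (0 : ℝ), muWithin Ω r l f ≤ ENNReal.ofReal a →
      muWithin Ω (r + 2) (l + 2) f ≤ ENNReal.ofReal b →
      muWithin Ω r (l + 1) f ≤ ENNReal.ofReal (K * (a / t + b * t)) := by
  obtain ⟨K, hK, hlandau⟩ := exists_zpow_mul_norm_iteratedFDerivWithin_succ_le (F := F) hΩ hint r
  refine ⟨K + 1, by positivity, fun f hf t ht a ha b hb hfa hfb => ?_⟩
  have ht0 : 0 < t := ht.1
  rw [muWithin_le_ofReal_iff ha] at hfa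
  rw [muWithin_le_ofReal_iff hb] at hfb
  have hsum : 0 ≤ a / t + b * t := by positivity
  refine (muWithin_le_ofReal_iff (by positivity)).2 fun x hx i hi => ?_
  cases i with
  | zero =>
    calc (1 + ‖x‖) ^ r * ‖iteratedFDerivWithin ℝ 0 f Ω x‖ ≤ a := hfa x hx 0 l.zero_le
      _ ≤ a / t + b * t :=
        (le_div_self ha ht0 ht.2).trans (le_add_of_nonneg_right (by positivity))
      _ ≤ (K + 1) * (a / t + b * t) := le_mul_of_one_le_left hsum (by linarith)
  | succ i =>
    have hil : i ≤ l := by omega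
    calc (1 + ‖x‖) ^ r * ‖iteratedFDerivWithin ℝ (i + 1) f Ω x‖ ≤ K * (a / t + b * t) :=
        hlandau f i (hf.of_le (by norm_cast; omega)) t ht a b (fun z hz => hfa z hz i hil)
          (fun z hz => hfb z hz (i + 2) (by omega)) x hx
      _ ≤ (K + 1) * (a / t + b * t) := by gcongr; linarith

end Landau

-- Take `t = ε ^ (N + p)`, with `h` of order `ε ^ (N + 2 * p)` and `k` of order `ε ^ (-N)`.
lemma isOEps_pow_of_le_div_add_mul {g h k : ℝ → ENNReal} {K : ℝ} (hK : 0 < K)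
    (hg : ∀ ε ∈ Set.Ioc (0 : ℝ) 1, ∀ t ∈ Set.Ioc (0 : ℝ) 1, ∀ a ≥ (0 : ℝ), ∀ b ≥ (0 : ℝ),
      h ε ≤ ENNReal.ofReal a → k ε ≤ ENNReal.ofReal b →
      g ε ≤ ENNReal.ofReal (K * (a / t + b * t)))
    (hh : ∀ p : ℕ, IsOEps h (fun ε => ε ^ p))
    (hk : ∃ N : ℕ, IsOEps k (fun ε => ε ^ (-(N : ℤ)))) (p : ℕ) :
    IsOEps g (fun ε => ε ^ p) := by
  obtain ⟨N, C₁, hC₁, η₁, hη₁, hk⟩ := hk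
  obtain ⟨C₂, hC₂, η₂, hη₂, hh⟩ := hh (p + (N + p))
  refine ⟨K * (C₂ + C₁), by positivity, min (min η₁ η₂) 1, by positivity, fun ε hε hεη => ?_⟩
  simp only [le_min_iff] at hεη
  obtain ⟨⟨hεη₁, hεη₂⟩, hε1⟩ := hεη
  have ht : ε ^ (N + p) ∈ Set.Ioc (0 : ℝ) 1 := ⟨by positivity, pow_le_one₀ hε.le hε1⟩
  have hbound := hg ε ⟨hε, hε1⟩ _ ht _ (by positivity) _ (by positivity) (hh ε hε hεη₂)
    (hk ε hε hεη₁)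
  have hlow : C₂ * ε ^ (p + (N + p)) / ε ^ (N + p) = C₂ * ε ^ p := by
    rw [pow_add ε p]
    field_simp
  have hhigh : C₁ * ε ^ (-(N : ℤ)) * ε ^ (N + p) = C₁ * ε ^ p := by
    rw [zpow_neg, zpow_natCast, pow_add]
    field_simp
  rwa [hlow, hhigh, ← add_mul, ← mul_assoc] at hbound

theorem stmt0_general {E F : Type*} [NormedAddCommGroup E] [NormedSpace ℝ E]
    [NormedAddCommGroup F] [NormedSpace ℝ F] {Ω : Set E} (hΩ : Convex ℝ Ω)
    (hreg : Ω ⊆ closure (interior Ω)) {f : ℝ → E → F}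
    (hsmooth : ∀ ε ∈ Set.Ioc (0 : ℝ) 1, ContDiffOn ℝ (⊤ : ℕ∞) (f ε) Ω) (r : ℤ)
    (hmod : ∀ l : ℕ, ∃ N : ℕ,
      IsOEps (fun ε => muWithin Ω (r + 2) l (f ε)) (fun ε => ε ^ (-(N : ℤ))))
    (hneg0 : ∀ p : ℕ, IsOEps (fun ε => muWithin Ω r 0 (f ε)) (fun ε => ε ^ p)) (l p : ℕ) :
    IsOEps (fun ε => muWithin Ω r l (f ε)) (fun ε => ε ^ p) := by
  rcases Ω.eq_empty_or_nonempty with rfl | hne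
  · exact ⟨1, one_pos, 1, one_pos, by simp [muWithin]⟩
  have hint : (interior Ω).Nonempty := closure_nonempty_iff.1 (hne.mono hreg)
  induction l generalizing p with
  | zero => exact hneg0 p
  | succ l ih =>
    obtain ⟨K, hK, hle⟩ := exists_muWithin_succ_le (F := F) hΩ hint r l
    have hsmooth' : ∀ ε ∈ Set.Ioc (0 : ℝ) 1, ContDiffOn ℝ (l + 2) (f ε) Ω := fun ε hε =>
      mod_cast contDiffOn_infty.1 (hsmooth ε hε) (l + 2)
    exact isOEps_pow_of_le_div_add_mul hK (fun ε hε => hle (f ε) (hsmooth' ε hε)) ih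
      (hmod (l + 2)) p

namespace IsBox

variable {d : ℕ} {Ω : Set (Fin d → ℝ)}

lemma isOpen (hΩ : IsBox Ω) : IsOpen Ω := by
  obtain ⟨I, hI, rfl⟩ := hΩ
  exact isOpen_set_pi Set.finite_univ fun j _ => (hI j).1

lemma convex (hΩ : IsBox Ω) : Convex ℝ Ω := by
  obtain ⟨I, hI, rfl⟩ := hΩ
  exact convex_pi fun j _ => (hI j).2

end IsBox

/-- `N_S(Ω) = N_{S,*}(Ω) ∩ E_S(Ω)` for a box `Ω`. -/
theorem stmt0 (d : ℕ) (hd : 1 ≤ d) (Ω : Set (Fin d → ℝ)) (hΩ : IsBox Ω)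
    (f : ℝ → (Fin d → ℝ) → ℂ)
    (hsmooth : ∀ ε ∈ Set.Ioc (0:ℝ) 1, ContDiffOn ℝ (⊤ : ℕ∞) (f ε) Ω)
    (hfin : ∀ ε ∈ Set.Ioc (0:ℝ) 1, ∀ q l : ℕ, muOn Ω (q:ℤ) l (f ε) < ⊤)
    (hmod : ∀ q l : ℕ, ∃ N : ℕ,
      IsOEps (fun ε => muOn Ω (q:ℤ) l (f ε)) (fun ε => ε ^ (-(N:ℤ))))
    (hneg0 : ∀ q p : ℕ, IsOEps (fun ε => muOn Ω (q:ℤ) 0 (f ε)) (fun ε => ε ^ p)) :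
    ∀ q l p : ℕ, IsOEps (fun ε => muOn Ω (q:ℤ) l (f ε)) (fun ε => ε ^ p) := by
  intro q
  exact stmt0_general hΩ.convex (hΩ.isOpen.interior_eq.symm ▸ subset_closure) hsmooth q
    (hmod (q + 2)) (hneg0 q)
end

section
/- Let d ≥ 1 and let Ω ⊆ ℝ^d be a box, i.e. a product of d open intervals (bounded or not). Let (f_ε)_{ε∈(0,1]} be a net of smooth functions f_ε : Ω → ℂ, each of temperate growth on Ω, such that for every l ∈ ℕ there exist q ∈ ℕ and N ∈ ℕ with μ_{-q,l}(f_ε) = O(ε^{-N}) as ε → 0 (i.e. (f_ε) ∈ E_τ(Ω)). If there exists q ∈ ℕ such that for every p ∈ ℕ one has μ_{-q,0}(f_ε) = O(ε^p) as ε → 0, then for every l ∈ ℕ there exists q' ∈ ℕ such that for every p ∈ ℕ one has μ_{-q',l}(f_ε) = O(ε^p) as ε → 0. In other words, N_τ(Ω) = N_{τ,*}(Ω) ∩ E_τ(Ω). -/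
open MeasureTheory Filter

/-!
Landau's inequality `‖f'‖ ≤ 2 ‖f‖ / t + t ‖f''‖` bounds a derivative by its two neighbours, with `t`
free. If `f_ε = O(ε^p)` for all `p` and `f_ε'' = O(ε^(-N))`, then `t = ε^(N+p)` gives
`f_ε' = O(ε^p)`, and one climbs through the orders of differentiation.

On a convex set `Ω` containing a ball of radius `r` about `x₀`, convexity puts inside `Ω` the image
of that ball under the homothety of centre `x ∈ Ω` and ratio `t`. Comparing values of `f` at
antipodal points of this image bounds `f'(x)` in every direction, without any room around `x`. The
image lies within distance `O(t (1 + ‖x‖))` of `x`, which costs a factor `(1 + ‖x‖)^2`.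
-/

lemma one_add_norm_add_dist_le {E : Type*} [SeminormedAddCommGroup E] (x x₀ : E)
    {r : ℝ} (hr : 0 ≤ r) :
    1 + ‖x‖ + (dist x₀ x + r) ≤ (2 + ‖x₀‖ + r) * (1 + ‖x‖) := calc
  1 + ‖x‖ + (dist x₀ x + r) ≤ 1 + ‖x‖ + (‖x₀‖ + ‖x‖ + r) := by
    gcongr
    exact dist_le_norm_add_norm x₀ x
  _ ≤ 1 + ‖x‖ + (‖x₀‖ + ‖x‖ + r) + (1 + (‖x₀‖ + r) * ‖x‖) :=
    le_add_of_nonneg_right (by positivity)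
  _ = (2 + ‖x₀‖ + r) * (1 + ‖x‖) := by ring

section Landau

variable {E F : Type*} [NormedAddCommGroup E] [NormedSpace ℝ E]
  [NormedAddCommGroup F] [NormedSpace ℝ F]

lemma norm_iteratedFDerivWithin_iteratedFDerivWithin {Ω : Set E} (hΩ : UniqueDiffOn ℝ Ω)
    (f : E → F) (m n : ℕ) {x : E} (hx : x ∈ Ω) :
    ‖iteratedFDerivWithin ℝ m (iteratedFDerivWithin ℝ n f Ω) Ω x‖ =
      ‖iteratedFDerivWithin ℝ (m + n) f Ω x‖ := by
  induction n generalizing m with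
  | zero =>
    rw [iteratedFDerivWithin_zero_eq_comp,
      LinearIsometryEquiv.norm_iteratedFDerivWithin_comp_left _ _ hΩ hx, add_zero]
  | succ n ih =>
    rw [iteratedFDerivWithin_succ_eq_comp_left,
      LinearIsometryEquiv.norm_iteratedFDerivWithin_comp_left
        (F := E →L[ℝ] E [×n]→L[ℝ] F) (G := E [×(n + 1)]→L[ℝ] F) _ _ hΩ hx,
      norm_iteratedFDerivWithin_fderivWithin hΩ hx, ih, add_right_comm, add_assoc]

lemma opNorm_le_of_closedBall_sub {L : E →L[ℝ] F} {x c : E} {s b : ℝ} (hs : 0 < s)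
    (h : ∀ y ∈ Metric.closedBall c s, ‖L (y - x)‖ ≤ b) : ‖L‖ ≤ b / s := by
  have hb : 0 ≤ b := (norm_nonneg _).trans (h c (Metric.mem_closedBall_self hs.le))
  refine L.opNorm_le_of_unit_norm (by positivity) fun v hv ↦ ?_
  have hmem : ‖s • v‖ ≤ s := by rw [norm_smul, hv, mul_one, Real.norm_of_nonneg hs.le]
  have hplus := h (c + s • v) (by simpa using hmem)
  have hminus := h (c - s • v) (by simpa using hmem)
  have hsplit : L (c + s • v - x) - L (c - s • v - x) = (2 * s) • L v := by
    rw [← map_sub, ← map_smul]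
    congr 1
    module
  have hdiff := norm_sub_le (L (c + s • v - x)) (L (c - s • v - x))
  rw [hsplit, norm_smul, Real.norm_of_nonneg (by positivity)] at hdiff
  rw [le_div_iff₀ hs]
  linarith

lemma closedBall_add_smul_sub_subset {Ω : Set E} (hΩ : Convex ℝ Ω) {x x₀ : E} {r t : ℝ}
    (hx : x ∈ Ω) (hball : Metric.closedBall x₀ r ⊆ Ω) (ht : 0 < t) (ht1 : t ≤ 1) :
    Metric.closedBall (x + t • (x₀ - x)) (t * r) ⊆ Ω := by
  intro y hy
  have hpre : x + t⁻¹ • (y - x) ∈ Metric.closedBall x₀ r := by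
    have heq : x + t⁻¹ • (y - x) - x₀ = t⁻¹ • (y - (x + t • (x₀ - x))) := by
      rw [← sub_sub, smul_sub t⁻¹ (y - x), inv_smul_smul₀ ht.ne']
      abel
    rw [mem_closedBall_iff_norm] at hy ⊢
    rwa [heq, norm_smul, norm_inv, Real.norm_of_nonneg ht.le, inv_mul_le_iff₀ ht]
  simpa [smul_inv_smul₀ ht.ne'] using hΩ.add_smul_sub_mem hx (hball hpre) ⟨ht.le, ht1⟩

lemma norm_fderiv_le_of_closedBall_subset {S : Set E} (hS : Convex ℝ S) {g : E → F}
    {g' : E → E →L[ℝ] F} {g'' : E → E →L[ℝ] E →L[ℝ] F}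
    (hg : ∀ z ∈ S, HasFDerivWithinAt g (g' z) S z)
    (hg' : ∀ z ∈ S, HasFDerivWithinAt g' (g'' z) S z) {A M R s : ℝ} {x c : E}
    (hA : ∀ z ∈ S, ‖g z‖ ≤ A) (hM : ∀ z ∈ S, ‖g'' z‖ ≤ M) (hx : x ∈ S)
    (hR : S ⊆ Metric.closedBall x R) (hs : 0 < s) (hball : Metric.closedBall c s ⊆ S) :
    ‖g' x‖ ≤ (2 * A + M * R ^ 2) / s := by
  have hM0 : 0 ≤ M := (norm_nonneg (g'' x)).trans (hM x hx)
  have hdist : ∀ z ∈ S, ‖z - x‖ ≤ R := fun z hz ↦ mem_closedBall_iff_norm.mp (hR hz)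
  have hR0 : 0 ≤ R := (norm_nonneg _).trans (hdist x hx)
  have hosc : ∀ z ∈ S, ‖g' z - g' x‖ ≤ M * R := fun z hz ↦
    (hS.norm_image_sub_le_of_norm_hasFDerivWithin_le hg' hM hx hz).trans
      (by gcongr; exact hdist z hz)
  refine opNorm_le_of_closedBall_sub (x := x) (c := c) hs fun y hy ↦ ?_
  have htaylor : ‖g y - g x - g' x (y - x)‖ ≤ M * R ^ 2 := calc
    _ ≤ M * R * ‖y - x‖ :=
      hS.norm_image_sub_le_of_norm_hasFDerivWithin_le' hg hosc hx (hball hy)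
    _ ≤ M * R * R := by gcongr; exact hdist y (hball hy)
    _ = M * R ^ 2 := by ring
  calc ‖g' x (y - x)‖ ≤ ‖g y - g x‖ + ‖g y - g x - g' x (y - x)‖ := norm_le_norm_add_norm_sub _ _
    _ ≤ A + A + M * R ^ 2 :=
      add_le_add ((norm_sub_le _ _).trans (add_le_add (hA y (hball hy)) (hA x hx))) htaylor
    _ = 2 * A + M * R ^ 2 := by ring

lemma norm_fderivWithin_le_of_inter_closedBall {Ω : Set E} (hconv : Convex ℝ Ω) {x₀ : E} {r : ℝ}
    (hr : 0 < r) (hball : Metric.closedBall x₀ r ⊆ Ω) {g : E → F} (hg : ContDiffOn ℝ 2 g Ω)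
    {a b t : ℝ} (ht : 0 < t) (ht1 : t ≤ 1) {x : E} (hx : x ∈ Ω)
    (ha : ∀ z ∈ Ω ∩ Metric.closedBall x (t * (dist x₀ x + r)), ‖g z‖ ≤ a)
    (hb : ∀ z ∈ Ω ∩ Metric.closedBall x (t * (dist x₀ x + r)),
      ‖iteratedFDerivWithin ℝ 2 g Ω z‖ ≤ b) :
    ‖fderivWithin ℝ g Ω x‖ ≤ (2 * a + b * (t * (dist x₀ x + r)) ^ 2) / (t * r) := by
  have hΩ : UniqueDiffOn ℝ Ω := uniqueDiffOn_convex hconv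
    ⟨x₀, interior_mono hball (mem_interior_iff_mem_nhds.mpr (Metric.closedBall_mem_nhds x₀ hr))⟩
  have hg' : ContDiffOn ℝ 1 (fderivWithin ℝ g Ω) Ω := hg.fderivWithin hΩ le_rfl
  have hcenter : t * r + dist (x + t • (x₀ - x)) x ≤ t * (dist x₀ x + r) := by
    rw [dist_eq_norm, add_sub_cancel_left, norm_smul, Real.norm_of_nonneg ht.le, dist_eq_norm,
      ← mul_add, add_comm r]
  refine norm_fderiv_le_of_closedBall_subset
    (hconv.inter (convex_closedBall x (t * (dist x₀ x + r))))
    (fun z hz ↦ (hg.differentiableOn two_ne_zero z hz.1).hasFDerivWithinAt.mono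
      Set.inter_subset_left)
    (fun z hz ↦ (hg'.differentiableOn one_ne_zero z hz.1).hasFDerivWithinAt.mono
      Set.inter_subset_left)
    ha (fun z hz ↦ ?_) ⟨hx, Metric.mem_closedBall_self (by positivity)⟩ Set.inter_subset_right
    (mul_pos ht hr)
    (Set.subset_inter (closedBall_add_smul_sub_subset hconv hx hball ht ht1)
      (Metric.closedBall_subset_closedBall' hcenter))
  rw [← norm_iteratedFDerivWithin_one _ (hΩ z hz.1),
    norm_iteratedFDerivWithin_fderivWithin hΩ hz.1]
  exact hb z hz

lemma norm_fderivWithin_le_of_norm_le_weight {Ω : Set E} (hconv : Convex ℝ Ω) {x₀ : E} {r : ℝ}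
    (hr : 0 < r) (hball : Metric.closedBall x₀ r ⊆ Ω) {g : E → F} (hg : ContDiffOn ℝ 2 g Ω)
    {q : ℕ} {A B t : ℝ} (ht : 0 < t) (ht1 : t ≤ 1)
    (hA : ∀ z ∈ Ω, ‖g z‖ ≤ A * (1 + ‖z‖) ^ q)
    (hB : ∀ z ∈ Ω, ‖iteratedFDerivWithin ℝ 2 g Ω z‖ ≤ B * (1 + ‖z‖) ^ q) {x : E} (hx : x ∈ Ω) :
    ‖fderivWithin ℝ g Ω x‖ ≤
      2 * (2 + ‖x₀‖ + r) ^ (q + 2) / r * (A / t + B * t) * (1 + ‖x‖) ^ (q + 2) := by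
  have hA0 : 0 ≤ A := nonneg_of_mul_nonneg_left ((norm_nonneg _).trans (hA x hx)) (by positivity)
  have hB0 : 0 ≤ B := nonneg_of_mul_nonneg_left ((norm_nonneg _).trans (hB x hx)) (by positivity)
  set K := 2 + ‖x₀‖ + r
  set ρ := K * (1 + ‖x‖) with hρ
  set D := dist x₀ x + r
  have hD : 1 + ‖x‖ + D ≤ ρ := one_add_norm_add_dist_le x x₀ hr.le
  have hD0 : 0 ≤ D := by positivity
  have hDρ : D ≤ ρ := by linarith [norm_nonneg x]
  have hρ1 : 1 ≤ ρ := by linarith [norm_nonneg x]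
  have hweight : ∀ z ∈ Ω ∩ Metric.closedBall x (t * D), 1 + ‖z‖ ≤ ρ := fun z hz ↦ by
    linarith [norm_le_norm_add_const_of_dist_le hz.2, mul_le_of_le_one_left hD0 ht1]
  have hlocal := norm_fderivWithin_le_of_inter_closedBall hconv hr hball hg ht ht1 hx
    (a := A * ρ ^ q) (b := B * ρ ^ q)
    (fun z hz ↦ (hA z hz.1).trans (by gcongr; exact hweight z hz))
    (fun z hz ↦ (hB z hz.1).trans (by gcongr; exact hweight z hz))
  calc ‖fderivWithin ℝ g Ω x‖ ≤ (2 * (A * ρ ^ q) + B * ρ ^ q * (t * D) ^ 2) / (t * r) := hlocal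
    _ ≤ (2 * (A * ρ ^ (q + 2)) + 2 * (B * ρ ^ q * (t * ρ) ^ 2)) / (t * r) := by
      have hvalue : A * ρ ^ q ≤ A * ρ ^ (q + 2) := by
        gcongr
        exact Nat.le_add_right q 2
      have hsecond : B * ρ ^ q * (t * D) ^ 2 ≤ 2 * (B * ρ ^ q * (t * ρ) ^ 2) := calc
        _ ≤ B * ρ ^ q * (t * ρ) ^ 2 := by gcongr
        _ ≤ _ := le_mul_of_one_le_left (by positivity) one_le_two
      gcongr
    _ = 2 * K ^ (q + 2) / r * (A / t + B * t) * (1 + ‖x‖) ^ (q + 2) := by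
      simp only [hρ, mul_pow]
      field_simp
      ring

end Landau

section Seminorms

variable {d : ℕ} {Ω : Set (Fin d → ℝ)}

lemma muOn_mono {r r' : ℤ} {l l' : ℕ} (hr : r ≤ r') (hl : l ≤ l') (f : (Fin d → ℝ) → ℂ) :
    muOn Ω r l f ≤ muOn Ω r' l' f := by
  refine iSup_mono fun x ↦ iSup_mono fun i ↦ iSup_mono' fun hi ↦ ⟨hi.trans hl, ?_⟩
  gcongr
  simp

lemma muOn_neg_le_ofReal_iff {q l : ℕ} {f : (Fin d → ℝ) → ℂ} {c : ℝ} (hc : 0 ≤ c) :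
    muOn Ω (-(q : ℤ)) l f ≤ ENNReal.ofReal c ↔
      ∀ x ∈ Ω, ∀ i ≤ l, ‖iteratedFDerivWithin ℝ i f Ω x‖ ≤ c * (1 + ‖x‖) ^ q := by
  have hweight : ∀ (x : Fin d → ℝ) (a : ℝ),
      (1 + ‖x‖) ^ (-(q : ℤ)) * a ≤ c ↔ a ≤ c * (1 + ‖x‖) ^ q := fun x a ↦ by
    rw [zpow_neg, zpow_natCast, inv_mul_le_iff₀ (by positivity), mul_comm]
  simp only [muOn, iSup_le_iff, ENNReal.ofReal_le_ofReal_iff hc, hweight, Subtype.forall]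

lemma exists_muOn_succ_le (hconv : Convex ℝ Ω) (hint : (interior Ω).Nonempty) (q : ℕ) :
    ∃ C > (0 : ℝ), ∀ f : (Fin d → ℝ) → ℂ, ContDiffOn ℝ (⊤ : ℕ∞) f Ω → ∀ (l : ℕ) (A B t : ℝ),
      0 ≤ A → 0 ≤ B → 0 < t → t ≤ 1 →
      muOn Ω (-(q : ℤ)) l f ≤ ENNReal.ofReal A →
      muOn Ω (-(q : ℤ)) (l + 2) f ≤ ENNReal.ofReal B →
      muOn Ω (-((q + 2 : ℕ) : ℤ)) (l + 1) f ≤ ENNReal.ofReal (C * (A / t + B * t)) := by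
  obtain ⟨x₀, hx₀⟩ := hint
  obtain ⟨r, hr, hball⟩ :=
    Metric.nhds_basis_closedBall.mem_iff.mp (mem_interior_iff_mem_nhds.mp hx₀)
  have hΩ : UniqueDiffOn ℝ Ω := uniqueDiffOn_convex hconv ⟨x₀, hx₀⟩
  set K := 2 * (2 + ‖x₀‖ + r) ^ (q + 2) / r
  have hK : 0 < K := by positivity
  refine ⟨1 + K, by positivity, fun f hf l A B t hA hB ht ht1 hfA hfB ↦ ?_⟩
  rw [muOn_neg_le_ofReal_iff (by positivity)] at hfA hfB ⊢
  intro x hx i hi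
  rcases Nat.le_succ_iff.mp hi with hil | rfl
  · have hAt : A ≤ (1 + K) * (A / t + B * t) := calc
      A ≤ A / t := le_div_self hA ht ht1
      _ ≤ A / t + B * t := le_add_of_nonneg_right (by positivity)
      _ ≤ (1 + K) * (A / t + B * t) := le_mul_of_one_le_left (by positivity) (by linarith)
    refine (hfA x hx i hil).trans ?_
    gcongr ?_ * ?_
    exact pow_le_pow_right₀ (by simp) (Nat.le_add_right q 2)
  · have hcont : ContDiffOn ℝ 2 (iteratedFDerivWithin ℝ l f Ω) Ω :=
      fun z hz ↦ (hf z hz).iteratedFDerivWithin_right hΩ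
        (WithTop.coe_le_coe.mpr (le_top (a := (2 + l : ℕ∞)))) hz
    have hlandau := norm_fderivWithin_le_of_norm_le_weight hconv hr hball hcont ht ht1
      (fun z hz ↦ hfA z hz l le_rfl)
      (fun z hz ↦ by
        rw [norm_iteratedFDerivWithin_iteratedFDerivWithin hΩ f 2 l hz, add_comm]
        exact hfB z hz (l + 2) le_rfl) hx
    rw [norm_fderivWithin_iteratedFDerivWithin] at hlandau
    refine hlandau.trans ?_
    gcongr
    linarith

end Seminorms

section Nets

lemma IsOEps.mono {g₁ g₂ : ℝ → ENNReal} {h : ℝ → ℝ} (hg : IsOEps g₂ h) (hle : ∀ ε, g₁ ε ≤ g₂ ε) :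
    IsOEps g₁ h := by
  obtain ⟨C, hC, η, hη, hbound⟩ := hg
  exact ⟨C, hC, η, hη, fun ε hε hεη ↦ (hle ε).trans (hbound ε hε hεη)⟩

lemma isOEps_pow_of_interpolation {g₀ g₁ g₂ : ℝ → ENNReal} {C : ℝ} (hC : 0 < C)
    (hinterp : ∀ ε ∈ Set.Ioc (0 : ℝ) 1, ∀ A B t : ℝ, 0 ≤ A → 0 ≤ B → 0 < t → t ≤ 1 →
      g₀ ε ≤ ENNReal.ofReal A → g₂ ε ≤ ENNReal.ofReal B →
      g₁ ε ≤ ENNReal.ofReal (C * (A / t + B * t)))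
    (h₀ : ∀ p : ℕ, IsOEps g₀ (fun ε ↦ ε ^ p)) {N : ℕ}
    (h₂ : IsOEps g₂ (fun ε ↦ ε ^ (-(N : ℤ)))) (p : ℕ) : IsOEps g₁ (fun ε ↦ ε ^ p) := by
  obtain ⟨B, hB, η₂, hη₂, hg₂⟩ := h₂
  obtain ⟨A, hA, η₀, hη₀, hg₀⟩ := h₀ (N + p + p)
  refine ⟨C * (A + B), by positivity, min 1 (min η₀ η₂), by positivity, fun ε hε hεη ↦ ?_⟩
  obtain ⟨hε1, hεη₀, hεη₂⟩ : ε ≤ 1 ∧ ε ≤ η₀ ∧ ε ≤ η₂ := by simpa only [le_min_iff] using hεη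
  refine (hinterp ε ⟨hε, hε1⟩ _ _ (ε ^ (N + p)) (by positivity) (by positivity) (by positivity)
    (pow_le_one₀ hε.le hε1) (hg₀ ε hε hεη₀) (hg₂ ε hε hεη₂)).trans_eq ?_
  have hbalance : A * ε ^ (N + p + p) / ε ^ (N + p) + B * ε ^ (-(N : ℤ)) * ε ^ (N + p) =
      (A + B) * ε ^ p := by
    rw [zpow_neg, zpow_natCast, pow_add _ (N + p) p, pow_add _ N p]
    field_simp
  rw [hbalance, mul_assoc]

end Nets

lemma IsBox.isOpen_s1 {d : ℕ} {Ω : Set (Fin d → ℝ)} (hΩ : IsBox Ω) : IsOpen Ω := by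
  obtain ⟨I, hI, rfl⟩ := hΩ
  exact isOpen_set_pi Set.finite_univ fun j _ ↦ (hI j).1

lemma IsBox.convex_s1 {d : ℕ} {Ω : Set (Fin d → ℝ)} (hΩ : IsBox Ω) : Convex ℝ Ω := by
  obtain ⟨I, hI, rfl⟩ := hΩ
  exact convex_pi fun j _ ↦ (hI j).2

theorem stmt1_general {d : ℕ} {Ω : Set (Fin d → ℝ)} (hconv : Convex ℝ Ω)
    (hint : Ω ⊆ closure (interior Ω)) {f : ℝ → (Fin d → ℝ) → ℂ}
    (hsmooth : ∀ ε ∈ Set.Ioc (0 : ℝ) 1, ContDiffOn ℝ (⊤ : ℕ∞) (f ε) Ω)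
    (hmod : ∀ l : ℕ, ∃ q N : ℕ,
      IsOEps (fun ε ↦ muOn Ω (-(q : ℤ)) l (f ε)) (fun ε ↦ ε ^ (-(N : ℤ))))
    (hneg0 : ∃ q : ℕ, ∀ p : ℕ,
      IsOEps (fun ε ↦ muOn Ω (-(q : ℤ)) 0 (f ε)) (fun ε ↦ ε ^ p)) (l : ℕ) :
    ∃ q : ℕ, ∀ p : ℕ, IsOEps (fun ε ↦ muOn Ω (-(q : ℤ)) l (f ε)) (fun ε ↦ ε ^ p) := by
  rcases Ω.eq_empty_or_nonempty with rfl | hne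
  · exact ⟨0, fun p ↦ ⟨1, one_pos, 1, one_pos, fun ε _ _ ↦ by simp [muOn]⟩⟩
  induction l with
  | zero => exact hneg0
  | succ l ih =>
    obtain ⟨q₀, hq₀⟩ := ih
    obtain ⟨q₂, N, hq₂⟩ := hmod (l + 2)
    obtain ⟨C, hC, hlandau⟩ :=
      exists_muOn_succ_le hconv (closure_nonempty_iff.mp (hne.mono hint)) (max q₀ q₂)
    exact ⟨max q₀ q₂ + 2, isOEps_pow_of_interpolation hC
      (fun ε hε ↦ hlandau (f ε) (hsmooth ε hε) l)
      (fun p ↦ (hq₀ p).mono fun ε ↦ muOn_mono (by lia) le_rfl _)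
      (hq₂.mono fun ε ↦ muOn_mono (by lia) le_rfl _)⟩

/-- `N_τ(Ω) = N_{τ,*}(Ω) ∩ E_τ(Ω)` for a box `Ω`. -/
theorem stmt1 (d : ℕ) (hd : 1 ≤ d) (Ω : Set (Fin d → ℝ)) (hΩ : IsBox Ω)
    (f : ℝ → (Fin d → ℝ) → ℂ)
    (hsmooth : ∀ ε ∈ Set.Ioc (0:ℝ) 1, ContDiffOn ℝ (⊤ : ℕ∞) (f ε) Ω)
    (htemp : ∀ ε ∈ Set.Ioc (0:ℝ) 1, ∀ l : ℕ, ∃ q : ℕ, muOn Ω (-(q:ℤ)) l (f ε) < ⊤)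
    (hmod : ∀ l : ℕ, ∃ q N : ℕ,
      IsOEps (fun ε => muOn Ω (-(q:ℤ)) l (f ε)) (fun ε => ε ^ (-(N:ℤ))))
    (hneg0 : ∃ q : ℕ, ∀ p : ℕ,
      IsOEps (fun ε => muOn Ω (-(q:ℤ)) 0 (f ε)) (fun ε => ε ^ p)) :
    ∀ l : ℕ, ∃ q' : ℕ, ∀ p : ℕ,
      IsOEps (fun ε => muOn Ω (-(q':ℤ)) l (f ε)) (fun ε => ε ^ p) := by
  have hreg : Ω ⊆ closure (interior Ω) := hΩ.isOpen_s1.interior_eq.symm ▸ subset_closure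
  exact stmt1_general hΩ.convex_s1 hreg hsmooth hmod hneg0
end

section
/- Let u be a tempered distribution on ℝ^d and let ρ be a mollifier on ℝ^d. For ε ∈ (0,1] define u_ε : ℝ^d → ℂ by u_ε(x) = u(y ↦ ρ_ε(x−y)). Then each u_ε is smooth with temperate growth, the net (u_ε)_{ε∈(0,1]} belongs to E_τ(ℝ^d), and moreover the induced embedding is injective: if (u_ε)_{ε∈(0,1]} belongs to N_τ(ℝ^d), then u = 0. -/
open MeasureTheory Filter

/-!
A tempered distribution `u` is continuous for a weighted `Cⁿ` norm, so by Hahn–Banach it factors as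
`u = U ∘ jet` through a Banach space of weighted jets. There the curve `x ↦ jet (τ x f)` of
translates of a Schwartz function `f` is smooth, and its derivatives grow polynomially in `x`.
Applied to the rescaled reflected mollifier `f = ρ̌_ε`, of norm `O(ε ^ (-N))`, this gives
moderateness.

For injectivity, both sides of `∫ φ(x) u(τ_x f) dx = ∫ f(x) u(τ_x φ) dx` are `U` of one Bochner
integral in jet space, the jet of a convolution. With `f = ρ̌_ε`, an approximate identity, the right
side tends to `(∫ ρ) u(φ)`, while the left side tends to `0` when the net is negligible.
-/

open scoped SchwartzMap LineDeriv BoundedContinuousFunction ContDiff Topology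

section LineDerivatives

variable {E F : Type*} [NormedAddCommGroup E] [NormedSpace ℝ E]
  [NormedAddCommGroup F] [NormedSpace ℝ F]

lemma lineDerivOp_comm (v w : E) (f : 𝓢(E, F)) : ∂_{v} (∂_{w} f) = ∂_{w} (∂_{v} f) := by
  ext x
  have hsymm : IsSymmSndFDerivAt ℝ f x :=
    f.contDiffAt 2 |>.isSymmSndFDerivAt (by simp)
  have h (v w : E) : ∂_{v} (∂_{w} f) x = iteratedFDeriv ℝ 2 f x ![v, w] := by
    rw [← SchwartzMap.iteratedLineDerivOp_eq_iteratedFDeriv]; rfl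
  rw [h, h, hsymm.iteratedFDeriv_cons]

lemma iteratedLineDerivOp_lineDerivOp {n : ℕ} (m : Fin n → E) (v : E) (f : 𝓢(E, F)) :
    ∂^{m} (∂_{v} f) = ∂_{v} (∂^{m} f) := by
  induction n with
  | zero => rfl
  | succ n ih =>
    rw [LineDeriv.iteratedLineDerivOp_succ_left, ih, lineDerivOp_comm,
      ← LineDeriv.iteratedLineDerivOp_succ_left]

lemma iteratedLineDerivOp_compCLMOfContinuousLinearEquiv {D : Type*} [NormedAddCommGroup D]
    [NormedSpace ℝ D] {n : ℕ} (m : Fin n → D) (g : D ≃L[ℝ] E) (f : 𝓢(E, F)) :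
    ∂^{m} (SchwartzMap.compCLMOfContinuousLinearEquiv ℝ g f)
      = SchwartzMap.compCLMOfContinuousLinearEquiv ℝ g (∂^{g ∘ m} f) := by
  induction n with
  | zero => rfl
  | succ n ih =>
    rw [LineDeriv.iteratedLineDerivOp_succ_left, ih,
      SchwartzMap.lineDerivOp_compCLMOfContinuousLinearEquiv]
    rfl

lemma iteratedLineDerivOp_sub {n : ℕ} (m : Fin n → E) (f g : 𝓢(E, F)) :
    ∂^{m} (f - g) = ∂^{m} f - ∂^{m} g :=
  map_sub (LineDeriv.iteratedLineDerivOpCLM ℝ 𝓢(E, F) m) f g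

lemma lineDerivOp_compSubConstCLM (v x : E) (f : 𝓢(E, F)) :
    ∂_{v} (f.compSubConstCLM ℝ x) = (∂_{v} f).compSubConstCLM ℝ x := by
  ext y
  exact congrArg (· v) (fderiv_comp_sub (𝕜 := ℝ) (f := f) (x := y) x)

lemma iteratedLineDerivOp_compSubConstCLM {n : ℕ} (m : Fin n → E) (x : E) (f : 𝓢(E, F)) :
    ∂^{m} (f.compSubConstCLM ℝ x) = (∂^{m} f).compSubConstCLM ℝ x := by
  induction n with
  | zero => rfl
  | succ n ih =>
    rw [LineDeriv.iteratedLineDerivOp_succ_left, ih, lineDerivOp_compSubConstCLM,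
      ← LineDeriv.iteratedLineDerivOp_succ_left]

-- The mean value inequality for `s ↦ f (y - s • z) + s • c` on `[0, 1]`.
lemma norm_comp_sub_sub_add_le {f : 𝓢(E, F)} {y z : E} {c : F} {M : ℝ}
    (h : ∀ s ∈ Set.Icc (0 : ℝ) 1, ‖∂_{z} f (y - s • z) - c‖ ≤ M) :
    ‖f (y - z) - f y + c‖ ≤ M := by
  have hasDerivAt_path (s : ℝ) :
      HasDerivAt (fun s : ℝ => f (y - s • z) + s • c) (c - ∂_{z} f (y - s • z)) s := by
    have hsub : HasDerivAt (fun s : ℝ => y - s • z) (-z) s := by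
      simpa using ((hasDerivAt_id s).smul_const z).const_sub y
    have hc : HasDerivAt (fun s : ℝ => s • c) c s := by
      simpa using (hasDerivAt_id s).smul_const c
    refine (((f.hasFDerivAt _).comp_hasDerivAt s hsub).add hc).congr_deriv ?_
    rw [map_neg, neg_add_eq_sub, SchwartzMap.lineDerivOp_apply_eq_fderiv]
  have key := norm_image_sub_le_of_norm_deriv_le_segment_01' (C := M)
    (fun s _ => (hasDerivAt_path s).hasDerivWithinAt)
    fun s hs => by rw [norm_sub_rev]; exact h s (Set.Ico_subset_Icc_self hs)
  simp only [one_smul, zero_smul, sub_zero, add_zero] at key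
  rwa [add_sub_right_comm] at key

end LineDerivatives

local notation "τ" => SchwartzMap.compSubConstCLM ℝ

section Jets

variable {E F : Type*} [NormedAddCommGroup E] [NormedSpace ℝ E]
  [NormedAddCommGroup F] [NormedSpace ℝ F]

variable (E F) in
/-- The Banach space in which the weighted jets of order `n` of Schwartz functions `E → F` live.
It is not reducible, so that its only real structure is the restriction of the complex one. -/
def JetSpace (n : ℕ) : Type _ := (i : Fin (n + 1)) → E →ᵇ (E [×i]→L[ℝ] F)

noncomputable instance (n : ℕ) : NormedAddCommGroup (JetSpace E F n) :=
  inferInstanceAs (NormedAddCommGroup ((i : Fin (n + 1)) → E →ᵇ (E [×i]→L[ℝ] F)))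

instance [CompleteSpace F] (n : ℕ) : CompleteSpace (JetSpace E F n) :=
  inferInstanceAs (CompleteSpace ((i : Fin (n + 1)) → E →ᵇ (E [×i]→L[ℝ] F)))

noncomputable instance [NormedSpace ℂ F] [IsScalarTower ℝ ℂ F] (n : ℕ) :
    NormedSpace ℂ (JetSpace E F n) :=
  inferInstanceAs (NormedSpace ℂ ((i : Fin (n + 1)) → E →ᵇ (E [×i]→L[ℝ] F)))

lemma exists_one_add_norm_pow_mul_norm_iteratedFDeriv_le (k i : ℕ) (f : 𝓢(E, F)) :
    ∃ C, ∀ y, ‖((1 + ‖y‖) ^ k : ℝ) • iteratedFDeriv ℝ i f y‖ ≤ C := by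
  have h := SchwartzMap.one_add_le_sup_seminorm_apply (𝕜 := ℝ) (m := (k, i)) le_rfl le_rfl f
  exact ⟨_, fun y => (norm_smul_of_nonneg (by positivity) _).trans_le (h y)⟩

variable [NormedSpace ℂ F] [IsScalarTower ℝ ℂ F]

/-- The bounded function `y ↦ (1 + ‖y‖) ^ k • Dⁱf(y)` attached to a Schwartz function `f`. -/
noncomputable def weightedIteratedFDeriv (k i : ℕ) : 𝓢(E, F) →ₗ[ℂ] E →ᵇ (E [×i]→L[ℝ] F) where
  toFun f := .ofNormedAddCommGroup (fun y => ((1 + ‖y‖) ^ k : ℝ) • iteratedFDeriv ℝ i f y)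
    (by
      have := (f.smooth ⊤).continuous_iteratedFDeriv (m := i) (mod_cast le_top)
      fun_prop)
    _ (exists_one_add_norm_pow_mul_norm_iteratedFDeriv_le k i f).choose_spec
  map_add' f g := by
    ext y : 1
    simp [iteratedFDeriv_add_apply (f.contDiffAt i) (g.contDiffAt i)]
  map_smul' c f := by
    ext y : 1
    simp [iteratedFDeriv_const_smul_apply (f.contDiffAt i), smul_comm _ c]

/-- The jet `(f, Df, …, Dⁿf)` of a Schwartz function, weighted by `(1 + ‖y‖) ^ k`. The norms of
these jets are continuous seminorms that generate the topology of `𝓢(E, F)`. -/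
noncomputable def jet (k n : ℕ) : 𝓢(E, F) →ₗ[ℂ] JetSpace E F n :=
  LinearMap.pi fun i : Fin (n + 1) => weightedIteratedFDeriv k i

lemma jet_apply_apply {k n : ℕ} (f : 𝓢(E, F)) (i : Fin (n + 1)) (y : E) (m : Fin i → E) :
    jet k n f i y m = ((1 + ‖y‖) ^ k : ℝ) • ∂^{m} f y :=
  congrArg _ SchwartzMap.iteratedLineDerivOp_eq_iteratedFDeriv.symm

lemma norm_jet_le_iff {k n : ℕ} {f : 𝓢(E, F)} {M : ℝ} (hM : 0 ≤ M) :
    ‖jet k n f‖ ≤ M ↔ ∀ i ≤ n, ∀ (m : Fin i → E) (y : E),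
      (1 + ‖y‖) ^ k * ‖∂^{m} f y‖ ≤ M * ∏ j, ‖m j‖ := by
  have norm_apply (i : Fin (n + 1)) (m : Fin i → E) (y : E) :
      ‖jet k n f i y m‖ = (1 + ‖y‖) ^ k * ‖∂^{m} f y‖ := by
    rw [jet_apply_apply, norm_smul_of_nonneg (by positivity)]
  have norm_le_iff : ‖jet k n f‖ ≤ M ↔ ∀ i, ‖jet k n f i‖ ≤ M := pi_norm_le_iff_of_nonneg hM
  simp only [norm_le_iff, BoundedContinuousFunction.norm_le hM,
    ContinuousMultilinearMap.opNorm_le_iff hM, norm_apply, Fin.forall_iff, Nat.lt_succ_iff]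
  exact forall₂_congr fun i _ => forall_comm

lemma one_add_norm_pow_mul_norm_iteratedLineDerivOp_le {k n i : ℕ} (hi : i ≤ n) (f : 𝓢(E, F))
    (m : Fin i → E) (y : E) :
    (1 + ‖y‖) ^ k * ‖∂^{m} f y‖ ≤ ‖jet k n f‖ * ∏ j, ‖m j‖ :=
  (norm_jet_le_iff (norm_nonneg _)).1 le_rfl i hi m y

lemma norm_jet_mono (k : ℕ) {n n' : ℕ} (hn : n ≤ n') (f : 𝓢(E, F)) :
    ‖jet k n f‖ ≤ ‖jet k n' f‖ :=
  (norm_jet_le_iff (norm_nonneg _)).2 fun _ hi m y =>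
    one_add_norm_pow_mul_norm_iteratedLineDerivOp_le (hi.trans hn) f m y

lemma norm_jet_lineDerivOp_le (k n : ℕ) (v : E) (f : 𝓢(E, F)) :
    ‖jet k n (∂_{v} f)‖ ≤ ‖v‖ * ‖jet k (n + 1) f‖ := by
  refine (norm_jet_le_iff (by positivity)).2 fun i hi m y => ?_
  have h := one_add_norm_pow_mul_norm_iteratedLineDerivOp_le (k := k) (Nat.succ_le_succ hi) f
    (Fin.cons v m : Fin (i + 1) → E) y
  rw [LineDeriv.iteratedLineDerivOp_succ_left, Fin.prod_univ_succ] at h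
  simp only [Fin.cons_zero, Fin.cons_succ, Fin.tail_cons] at h
  rw [iteratedLineDerivOp_lineDerivOp]
  linarith

lemma one_add_norm_le_mul_one_add_norm_sub {V : Type*} [SeminormedAddCommGroup V] (x y : V) :
    1 + ‖y‖ ≤ (1 + ‖x‖) * (1 + ‖y - x‖) := by
  have h : ‖y‖ ≤ ‖x‖ + ‖y - x‖ := norm_le_norm_add_norm_sub' y x
  nlinarith [mul_nonneg (norm_nonneg x) (norm_nonneg (y - x))]

lemma norm_jet_compSubConstCLM_le (k n : ℕ) (x : E) (f : 𝓢(E, F)) :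
    ‖jet k n (τ x f)‖ ≤ (1 + ‖x‖) ^ k * ‖jet k n f‖ := by
  refine (norm_jet_le_iff (by positivity)).2 fun i hi m y => ?_
  rw [iteratedLineDerivOp_compSubConstCLM, SchwartzMap.compSubConstCLM_apply]
  calc (1 + ‖y‖) ^ k * ‖∂^{m} f (y - x)‖
      ≤ ((1 + ‖x‖) * (1 + ‖y - x‖)) ^ k * ‖∂^{m} f (y - x)‖ := by
        gcongr; exact one_add_norm_le_mul_one_add_norm_sub x y
    _ = (1 + ‖x‖) ^ k * ((1 + ‖y - x‖) ^ k * ‖∂^{m} f (y - x)‖) := by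
        rw [mul_pow, mul_assoc]
    _ ≤ (1 + ‖x‖) ^ k * (‖jet k n f‖ * ∏ j, ‖m j‖) :=
        mul_le_mul_of_nonneg_left
          (one_add_norm_pow_mul_norm_iteratedLineDerivOp_le hi f m _) (by positivity)
    _ = (1 + ‖x‖) ^ k * ‖jet k n f‖ * ∏ j, ‖m j‖ := by rw [mul_assoc]

lemma seminorm_le_norm_jet {k k' n n' : ℕ} (hk : k ≤ k') (hn : n ≤ n') (f : 𝓢(E, F)) :
    SchwartzMap.seminorm ℂ k n f ≤ ‖jet k' n' f‖ := by
  refine SchwartzMap.seminorm_le_bound ℂ k n f (norm_nonneg _) fun y => ?_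
  have hy : ‖y‖ ^ k ≤ (1 + ‖y‖) ^ k' :=
    (pow_le_pow_left₀ (norm_nonneg y) (by linarith) k).trans
      (pow_le_pow_right₀ (by linarith [norm_nonneg y]) hk)
  calc ‖y‖ ^ k * ‖iteratedFDeriv ℝ n f y‖
      ≤ (1 + ‖y‖) ^ k' * ‖iteratedFDeriv ℝ n f y‖ := by gcongr
    _ = ‖jet k' n' f ⟨n, by omega⟩ y‖ := (norm_smul_of_nonneg (by positivity) _).symm
    _ ≤ ‖jet k' n' f‖ := (BoundedContinuousFunction.norm_coe_le_norm _ y).trans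
        (norm_le_pi_norm
          (G := fun i : Fin (n' + 1) => E →ᵇ (E [×i]→L[ℝ] F)) (jet k' n' f) _)

lemma exists_norm_le_mul_norm_jet (u : 𝓢(E, F) →L[ℂ] ℂ) :
    ∃ k n : ℕ, ∃ C : ℝ, ∀ f, ‖u f‖ ≤ C * ‖jet k n f‖ := by
  obtain ⟨s, C, -, h⟩ := Seminorm.bound_of_continuous (schwartz_withSeminorms ℂ E F)
    ((normSeminorm ℂ ℂ).comp u.toLinearMap) u.continuous.norm
  refine ⟨s.sup Prod.fst, s.sup Prod.snd, C, fun f => (h f).trans ?_⟩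
  rw [smul_apply]
  refine mul_le_mul_of_nonneg_left ?_ C.2
  exact Seminorm.finset_sup_apply_le (norm_nonneg _) fun m hm =>
    seminorm_le_norm_jet (Finset.le_sup (f := Prod.fst) hm) (Finset.le_sup (f := Prod.snd) hm) f

end Jets

lemma exists_continuousLinearMap_comp_eq {𝕜 V W : Type*} [RCLike 𝕜] [AddCommGroup V] [Module 𝕜 V]
    [NormedAddCommGroup W] [NormedSpace 𝕜 W] (T : V →ₗ[𝕜] W) (u : V →ₗ[𝕜] 𝕜) {C : ℝ}
    (hu : ∀ f, ‖u f‖ ≤ C * ‖T f‖) : ∃ U : W →L[𝕜] 𝕜, ∀ f, U (T f) = u f := by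
  obtain ⟨S, hS⟩ := T.rangeRestrict.exists_rightInverse_of_surjective T.range_rangeRestrict
  have hTS (w : T.range) : T (S w) = w := congrArg Subtype.val (LinearMap.congr_fun hS w)
  have huS (f : V) : u (S (T.rangeRestrict f)) = u f := by
    have h : ‖u (S (T.rangeRestrict f) - f)‖ ≤ 0 := by
      simpa [hTS] using hu (S (T.rangeRestrict f) - f)
    simpa [sub_eq_zero] using h
  obtain ⟨U, hU, -⟩ := exists_extension_norm_eq T.range
    ((u ∘ₗ S).mkContinuous C fun w => by simpa [hTS] using hu (S w))
  exact ⟨U, fun f => (hU (T.rangeRestrict f)).trans (huS f)⟩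

lemma exists_continuousLinearMap_jet_eq {E F : Type*} [NormedAddCommGroup E] [NormedSpace ℝ E]
    [NormedAddCommGroup F] [NormedSpace ℝ F] [NormedSpace ℂ F] [IsScalarTower ℝ ℂ F]
    (u : 𝓢(E, F) →L[ℂ] ℂ) :
    ∃ k n : ℕ, ∃ U : JetSpace E F n →L[ℂ] ℂ, ∀ f, U (jet k n f) = u f := by
  obtain ⟨k, n, C, hC⟩ := exists_norm_le_mul_norm_jet u
  obtain ⟨U, hU⟩ := exists_continuousLinearMap_comp_eq (jet k n) u.toLinearMap hC
  exact ⟨k, n, U, hU⟩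

section TranslationCurve

variable {E F : Type*} [NormedAddCommGroup E] [NormedSpace ℝ E]
  [NormedAddCommGroup F] [NormedSpace ℝ F] [NormedSpace ℂ F] [IsScalarTower ℝ ℂ F]

lemma norm_jet_compSubConstCLM_sub_add_le {k n : ℕ} {z : E} {f g : 𝓢(E, F)} {M : ℝ}
    (h : ∀ s ∈ Set.Icc (0 : ℝ) 1, ‖jet k n (τ (s • z) (∂_{z} f) - g)‖ ≤ M) :
    ‖jet k n (τ z f - f + g)‖ ≤ M := by
  have hM : 0 ≤ M := (norm_nonneg _).trans (h 0 (by simp))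
  refine (norm_jet_le_iff hM).2 fun i hi m y => ?_
  rw [LineDeriv.iteratedLineDerivOp_add, iteratedLineDerivOp_sub,
    iteratedLineDerivOp_compSubConstCLM, ← le_div_iff₀' (by positivity)]
  refine norm_comp_sub_sub_add_le fun s hs => ?_
  have hm := (norm_jet_le_iff hM).1 (h s hs) i hi m y
  rwa [iteratedLineDerivOp_sub, iteratedLineDerivOp_compSubConstCLM,
    iteratedLineDerivOp_lineDerivOp, ← le_div_iff₀' (by positivity)] at hm

lemma norm_jet_compSubConstCLM_sub_le (k n : ℕ) (z : E) (f : 𝓢(E, F)) :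
    ‖jet k n (τ z f - f)‖ ≤ (1 + ‖z‖) ^ k * ‖jet k n (∂_{z} f)‖ := by
  rw [← add_zero (τ z f - f)]
  refine norm_jet_compSubConstCLM_sub_add_le fun s hs => ?_
  rw [sub_zero]
  refine (norm_jet_compSubConstCLM_le k n _ _).trans ?_
  gcongr
  rw [norm_smul_of_nonneg hs.1]
  exact mul_le_of_le_one_left (norm_nonneg z) hs.2

lemma norm_jet_compSubConstCLM_sub_add_lineDerivOp_le (k n : ℕ) (z : E) (f : 𝓢(E, F)) :
    ‖jet k n (τ z f - f + ∂_{z} f)‖ ≤ (1 + ‖z‖) ^ k * (‖z‖ ^ 2 * ‖jet k (n + 2) f‖) := by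
  refine norm_jet_compSubConstCLM_sub_add_le fun s hs => ?_
  have hsz : ‖s • z‖ ≤ ‖z‖ := by
    rw [norm_smul_of_nonneg hs.1]
    exact mul_le_of_le_one_left (norm_nonneg z) hs.2
  calc ‖jet k n (τ (s • z) (∂_{z} f) - ∂_{z} f)‖
      ≤ (1 + ‖s • z‖) ^ k * ‖jet k n (∂_{s • z} (∂_{z} f))‖ :=
        norm_jet_compSubConstCLM_sub_le k n _ _
    _ ≤ (1 + ‖s • z‖) ^ k * (‖s • z‖ * (‖z‖ * ‖jet k (n + 2) f‖)) := by
        gcongr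
        refine (norm_jet_lineDerivOp_le k n _ _).trans ?_
        gcongr
        exact norm_jet_lineDerivOp_le k (n + 1) z f
    _ ≤ (1 + ‖z‖) ^ k * (‖z‖ * (‖z‖ * ‖jet k (n + 2) f‖)) := by gcongr
    _ = _ := by ring

/-- The continuous linear map `v ↦ jet k n (∂_{v} f)`, which is minus the derivative of
`x ↦ jet k n (τ x f)` at `0`. -/
noncomputable def jetLineDeriv (k n : ℕ) (f : 𝓢(E, F)) : E →L[ℝ] JetSpace E F n :=
  LinearMap.mkContinuous ({
      toFun v := jet k n (∂_{v} f : 𝓢(E, F))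
      map_add' v w := by rw [LineDeriv.lineDerivOp_left_add, map_add]
      map_smul' c v := by
        rw [LineDeriv.lineDerivOp_left_smul, RingHom.id_apply, LinearMap.map_smul_of_tower] } :
      E →ₗ[ℝ] JetSpace E F n)
    ‖jet k (n + 1) f‖ fun v => by rw [mul_comm]; exact norm_jet_lineDerivOp_le k n v f

lemma hasFDerivAt_jet_compSubConstCLM (k n : ℕ) (f : 𝓢(E, F)) (x : E) :
    HasFDerivAt (fun x => jet k n (τ x f)) (-jetLineDeriv k n (τ x f)) x := by
  rw [hasFDerivAt_iff_isLittleO_nhds_zero]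
  have remainder_eq (h : E) : jet k n (τ (x + h) f) - jet k n (τ x f)
      - (-jetLineDeriv k n (τ x f)) h = jet k n (τ h (τ x f) - τ x f + ∂_{h} (τ x f)) := by
    rw [map_add, map_sub, SchwartzMap.compSubConstCLM_comp, neg_apply,
      sub_neg_eq_add]
    rfl
  have remainder_isBigO : (fun h => jet k n (τ h (τ x f) - τ x f + ∂_{h} (τ x f)))
      =O[𝓝 0] fun h : E => ‖h‖ ^ 2 := by
    refine .of_bound (2 ^ k * ‖jet k (n + 2) (τ x f)‖) ?_
    filter_upwards [Metric.closedBall_mem_nhds (0 : E) one_pos] with h hh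
    rw [mem_closedBall_zero_iff] at hh
    calc _ ≤ (1 + ‖h‖) ^ k * (‖h‖ ^ 2 * ‖jet k (n + 2) (τ x f)‖) :=
          norm_jet_compSubConstCLM_sub_add_lineDerivOp_le k n h _
      _ ≤ 2 ^ k * (‖h‖ ^ 2 * ‖jet k (n + 2) (τ x f)‖) := by gcongr; linarith
      _ = _ := by rw [norm_pow, norm_norm]; ring
  simp_rw [remainder_eq]
  exact remainder_isBigO.trans_isLittleO (Asymptotics.isLittleO_norm_pow_id one_lt_two)

lemma fderiv_jet_compSubConstCLM_apply (k n : ℕ) (f : 𝓢(E, F)) (x v : E) :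
    fderiv ℝ (fun x => jet k n (τ x f)) x v = -jet k n (τ x (∂_{v} f)) := by
  rw [(hasFDerivAt_jet_compSubConstCLM k n f x).fderiv, neg_apply,
    ← lineDerivOp_compSubConstCLM]
  rfl

lemma contDiff_jet_compSubConstCLM [FiniteDimensional ℝ E] (k n : ℕ) (f : 𝓢(E, F)) :
    ContDiff ℝ ∞ (fun x => jet k n (τ x f)) := by
  have differentiable (f : 𝓢(E, F)) : Differentiable ℝ fun x => jet k n (τ x f) := fun x =>
    (hasFDerivAt_jet_compSubConstCLM k n f x).differentiableAt
  refine contDiff_infty.2 fun l => ?_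
  induction l generalizing f with
  | zero => simpa using (differentiable f).continuous
  | succ l ih =>
    rw [Nat.cast_add, Nat.cast_one, contDiff_succ_iff_fderiv_apply]
    refine ⟨differentiable f, fun h => by simp at h, fun v => ?_⟩
    simp_rw [fderiv_jet_compSubConstCLM_apply]
    exact (ih _).neg

lemma iteratedFDeriv_jet_compSubConstCLM_apply [FiniteDimensional ℝ E] (k n : ℕ) {i : ℕ}
    (f : 𝓢(E, F)) (x : E) (m : Fin i → E) :
    iteratedFDeriv ℝ i (fun x => jet k n (τ x f)) x m
      = (-1 : ℝ) ^ i • jet k n (τ x (∂^{m} f)) := by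
  induction i generalizing x with
  | zero => simp
  | succ i ih =>
    have hd : Differentiable ℝ (iteratedFDeriv ℝ i fun x => jet k n (τ x f)) :=
      (contDiff_jet_compSubConstCLM k n f).differentiable_iteratedFDeriv
        (mod_cast WithTop.coe_lt_top _)
    rw [(hd x).iteratedFDeriv_succ_apply_left']
    simp_rw [ih]
    rw [fderiv_fun_const_smul (hasFDerivAt_jet_compSubConstCLM k n _ x).differentiableAt,
      smul_apply, fderiv_jet_compSubConstCLM_apply,
      LineDeriv.iteratedLineDerivOp_succ_left, pow_succ, mul_neg_one, neg_smul, smul_neg]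

lemma norm_jet_iteratedLineDerivOp_le (k n : ℕ) {i : ℕ} (m : Fin i → E) (f : 𝓢(E, F)) :
    ‖jet k n (∂^{m} f)‖ ≤ ‖jet k (n + i) f‖ * ∏ j, ‖m j‖ := by
  induction i generalizing n with
  | zero => simp
  | succ i ih =>
    rw [LineDeriv.iteratedLineDerivOp_succ_left, Fin.prod_univ_succ]
    calc _ ≤ ‖m 0‖ * ‖jet k (n + 1) (∂^{Fin.tail m} f)‖ := norm_jet_lineDerivOp_le k n _ _
      _ ≤ ‖m 0‖ * (‖jet k (n + 1 + i) f‖ * ∏ j, ‖Fin.tail m j‖) := by gcongr; exact ih _ _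
      _ = _ := by rw [add_assoc n, add_comm 1 i]; simp only [Fin.tail]; ring

lemma norm_iteratedFDeriv_jet_compSubConstCLM_le [FiniteDimensional ℝ E] (k n i : ℕ)
    (f : 𝓢(E, F)) (x : E) :
    ‖iteratedFDeriv ℝ i (fun x => jet k n (τ x f)) x‖ ≤ (1 + ‖x‖) ^ k * ‖jet k (n + i) f‖ := by
  refine ContinuousMultilinearMap.opNorm_le_bound (by positivity) fun m => ?_
  rw [iteratedFDeriv_jet_compSubConstCLM_apply, norm_smul, norm_pow, norm_neg, norm_one, one_pow,
    one_mul, mul_assoc]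
  refine (norm_jet_compSubConstCLM_le k n x _).trans ?_
  gcongr
  exact norm_jet_iteratedLineDerivOp_le k n m f

lemma contDiff_apply_compSubConstCLM [FiniteDimensional ℝ E] (u : 𝓢(E, F) →L[ℂ] ℂ)
    (f : 𝓢(E, F)) : ContDiff ℝ ∞ fun x => u (τ x f) := by
  obtain ⟨k, n, U, hU⟩ := exists_continuousLinearMap_jet_eq u
  simp_rw [← hU]
  exact (U.restrictScalars ℝ).contDiff.comp (contDiff_jet_compSubConstCLM k n f)

lemma exists_norm_iteratedFDeriv_apply_compSubConstCLM_le [FiniteDimensional ℝ E]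
    (u : 𝓢(E, F) →L[ℂ] ℂ) : ∃ k n : ℕ, ∃ C ≥ 0, ∀ (i : ℕ) (f : 𝓢(E, F)) (x : E),
      ‖iteratedFDeriv ℝ i (fun x => u (τ x f)) x‖ ≤ (1 + ‖x‖) ^ k * (C * ‖jet k (n + i) f‖) := by
  obtain ⟨k, n, U, hU⟩ := exists_continuousLinearMap_jet_eq u
  refine ⟨k, n, ‖U‖, norm_nonneg U, fun i f x => ?_⟩
  simp_rw [← hU]
  calc _ ≤ ‖U.restrictScalars ℝ‖ * ‖iteratedFDeriv ℝ i (fun x => jet k n (τ x f)) x‖ :=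
        (U.restrictScalars ℝ).norm_iteratedFDeriv_comp_left
          (contDiff_jet_compSubConstCLM k n f).contDiffAt (mod_cast le_top)
    _ ≤ ‖U‖ * ((1 + ‖x‖) ^ k * ‖jet k (n + i) f‖) := by
        rw [ContinuousLinearMap.norm_restrictScalars]
        gcongr
        exact norm_iteratedFDeriv_jet_compSubConstCLM_le k n i f x
    _ = _ := by ring

end TranslationCurve

section Nets

variable {E : Type*} [NormedAddCommGroup E] [NormedSpace ℝ E]

lemma isEtauNet_of_norm_iteratedFDeriv_le {f : ℝ → E → ℂ}
    (hf : ∀ ε ∈ Set.Ioc (0 : ℝ) 1, ContDiff ℝ ∞ (f ε))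
    (hbound : ∀ l : ℕ, ∃ q N : ℕ, ∃ C ≥ (0 : ℝ), ∀ ε ∈ Set.Ioc (0 : ℝ) 1, ∀ i ≤ l, ∀ x,
      ‖iteratedFDeriv ℝ i (f ε) x‖ ≤ (1 + ‖x‖) ^ q * (C * ε ^ (-(N : ℤ)))) :
    IsEtauNet f := by
  have mu_le (l : ℕ) : ∃ q N : ℕ, ∃ C > 0, ∀ ε ∈ Set.Ioc (0 : ℝ) 1,
      mu (-(q : ℤ)) l (f ε) ≤ ENNReal.ofReal (C * ε ^ (-(N : ℤ))) := by
    obtain ⟨q, N, C, hC, h⟩ := hbound l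
    refine ⟨q, N, C + 1, by positivity, fun ε hε => ?_⟩
    have hεN : 0 < ε ^ (-(N : ℤ)) := zpow_pos hε.1 _
    refine iSup_le fun x => iSup₂_le fun i hi => ENNReal.ofReal_le_ofReal ?_
    rw [zpow_neg, zpow_natCast, inv_mul_le_iff₀ (by positivity)]
    refine (h ε hε i hi x).trans ?_
    gcongr
    linarith
  refine ⟨fun ε hε => ⟨hf ε hε, fun l => ?_⟩, fun l => ?_⟩
  · obtain ⟨q, N, C, -, h⟩ := mu_le l
    exact ⟨q, (h ε hε).trans_lt ENNReal.ofReal_lt_top⟩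
  · obtain ⟨q, N, C, hC, h⟩ := mu_le l
    exact ⟨q, N, C, hC, 1, one_pos, fun ε h0 h1 => h ε ⟨h0, h1⟩⟩

lemma IsEtauNet.congr {f g : ℝ → E → ℂ} (hf : IsEtauNet f) (h : Set.EqOn f g (Set.Ioc 0 1)) :
    IsEtauNet g := by
  refine ⟨fun ε hε => h hε ▸ hf.1 ε hε, fun l => ?_⟩
  obtain ⟨q, N, C, hC, η, hη, hle⟩ := hf.2 l
  refine ⟨q, N, C, hC, min η 1, lt_min hη one_pos, fun ε h0 h1 => ?_⟩
  simp only [← h ⟨h0, h1.trans (min_le_right _ _)⟩]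
  exact hle ε h0 (h1.trans (min_le_left _ _))

lemma norm_le_of_mu_neg_le {q l : ℕ} {f : E → ℂ} {M : ℝ} (hM : 0 ≤ M)
    (h : mu (-(q : ℤ)) l f ≤ ENNReal.ofReal M) (x : E) :
    ‖f x‖ ≤ (1 + ‖x‖) ^ q * M := by
  have hx := (le_iSup_of_le x (le_iSup₂_of_le 0 (Nat.zero_le l) le_rfl)).trans h
  rwa [ENNReal.ofReal_le_ofReal_iff hM, norm_iteratedFDeriv_zero, zpow_neg, zpow_natCast,
    inv_mul_le_iff₀ (by positivity)] at hx

end Nets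

section Regularization

variable {E F : Type*} [NormedAddCommGroup E] [NormedSpace ℝ E]
  [NormedAddCommGroup F] [NormedSpace ℝ F]

/-- The rescaled and reflected mollifier `y ↦ t ^ (-d) • ρ (-y / t)` with `d = dim E`, as a Schwartz
function of `y`; its translates are the functions `y ↦ ρₜ (x - y)`. The value at `t = 0` is `0`. -/
noncomputable def scaledReflection (ρ : 𝓢(E, F)) (t : ℝ) : 𝓢(E, F) :=
  if ht : t = 0 then 0 else
    (t ^ (-(Module.finrank ℝ E : ℤ)) : ℝ) • SchwartzMap.compCLMOfContinuousLinearEquiv ℝ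
      (.smulLeft (Units.mk0 (-t⁻¹) (neg_ne_zero.2 (inv_ne_zero ht)))) ρ

lemma scaledReflection_apply (ρ : 𝓢(E, F)) {t : ℝ} (ht : t ≠ 0) (y : E) :
    scaledReflection ρ t y = (t ^ (-(Module.finrank ℝ E : ℤ)) : ℝ) • ρ (-t⁻¹ • y) := by
  rw [scaledReflection, dif_neg ht]
  rfl

lemma iteratedLineDerivOp_scaledReflection_apply (ρ : 𝓢(E, F)) {t : ℝ} (ht : t ≠ 0) {i : ℕ}
    (m : Fin i → E) (y : E) : ∂^{m} (scaledReflection ρ t) y =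
      (t ^ (-(Module.finrank ℝ E : ℤ)) : ℝ) • ∂^{fun j => -t⁻¹ • m j} ρ (-t⁻¹ • y) := by
  rw [scaledReflection, dif_neg ht, LineDeriv.iteratedLineDerivOp_smul,
    iteratedLineDerivOp_compCLMOfContinuousLinearEquiv]
  rfl

variable [NormedSpace ℂ F] [IsScalarTower ℝ ℂ F]

lemma norm_jet_scaledReflection_le (k n : ℕ) (ρ : 𝓢(E, F)) {t : ℝ} (ht : t ∈ Set.Ioc (0 : ℝ) 1) :
    ‖jet k n (scaledReflection ρ t)‖
      ≤ t ^ (-((Module.finrank ℝ E + n : ℕ) : ℤ)) * ‖jet k n ρ‖ := by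
  obtain ⟨ht0, ht1⟩ := ht
  have ht1' : 1 ≤ t⁻¹ := (one_le_inv₀ ht0).2 ht1
  have norm_smul_eq (z : E) : ‖-t⁻¹ • z‖ = t⁻¹ * ‖z‖ := by
    rw [norm_smul, norm_neg, norm_inv, Real.norm_of_nonneg ht0.le]
  refine (norm_jet_le_iff (by positivity)).2 fun i hi m y => ?_
  rw [iteratedLineDerivOp_scaledReflection_apply ρ ht0.ne', norm_smul_of_nonneg (by positivity)]
  have hy : ‖y‖ ≤ ‖-t⁻¹ • y‖ := by
    rw [norm_smul_eq]; exact le_mul_of_one_le_left (norm_nonneg y) ht1'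
  have hρ := one_add_norm_pow_mul_norm_iteratedLineDerivOp_le (k := k) hi ρ
    (fun j => -t⁻¹ • m j) (-t⁻¹ • y)
  simp only [norm_smul_eq, Finset.prod_mul_distrib, Finset.prod_const, Finset.card_univ,
    Fintype.card_fin] at hρ hy
  set D := ‖∂^{fun j => -t⁻¹ • m j} ρ (-t⁻¹ • y)‖
  set c := t ^ (-(Module.finrank ℝ E : ℤ)) with hc
  calc (1 + ‖y‖) ^ k * (c * D) ≤ (1 + t⁻¹ * ‖y‖) ^ k * (c * D) := by gcongr
    _ = c * ((1 + t⁻¹ * ‖y‖) ^ k * D) := by ring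
    _ ≤ c * (‖jet k n ρ‖ * (t⁻¹ ^ i * ∏ j, ‖m j‖)) := by gcongr
    _ ≤ c * (‖jet k n ρ‖ * (t⁻¹ ^ n * ∏ j, ‖m j‖)) := by gcongr
    _ = _ := by
        rw [hc, Nat.cast_add, neg_add, zpow_add₀ ht0.ne', zpow_neg t n, zpow_natCast, ← inv_pow]
        ring

/-- The regularization `x ↦ u (y ↦ ρₜ (x - y))` of a tempered distribution `u`. -/
noncomputable def regularization (u : 𝓢(E, F) →L[ℂ] ℂ) (ρ : 𝓢(E, F)) (t : ℝ) (x : E) : ℂ :=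
  u (τ x (scaledReflection ρ t))

lemma isEtauNet_regularization [FiniteDimensional ℝ E] (u : 𝓢(E, F) →L[ℂ] ℂ) (ρ : 𝓢(E, F)) :
    IsEtauNet (regularization u ρ) := by
  obtain ⟨k, n, C, hC, hu⟩ := exists_norm_iteratedFDeriv_apply_compSubConstCLM_le u
  refine isEtauNet_of_norm_iteratedFDeriv_le (fun ε _ => contDiff_apply_compSubConstCLM u _)
    fun l => ⟨k, Module.finrank ℝ E + (n + l), C * ‖jet k (n + l) ρ‖, by positivity,
      fun ε hε i hi x => (hu i _ x).trans ?_⟩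
  gcongr ?_ * ?_
  calc C * ‖jet k (n + i) (scaledReflection ρ ε)‖
      ≤ C * ‖jet k (n + l) (scaledReflection ρ ε)‖ := by
        gcongr; exact norm_jet_mono k (by omega) _
    _ ≤ C * (ε ^ (-((Module.finrank ℝ E + (n + l) : ℕ) : ℤ)) * ‖jet k (n + l) ρ‖) := by
        gcongr; exact norm_jet_scaledReflection_le k (n + l) ρ hε
    _ = _ := by ring

end Regularization

section Convolution

variable {E : Type*} [NormedAddCommGroup E] [NormedSpace ℝ E] [FiniteDimensional ℝ E]
  [MeasurableSpace E] [BorelSpace E] (μ : Measure E) [μ.IsAddHaarMeasure]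

lemma integral_mul_lineDerivOp_comp_sub (φ f : 𝓢(E, ℂ)) (v y : E) :
    ∫ x, φ x * ∂_{v} f (y - x) ∂μ = ∫ x, ∂_{v} φ x * f (y - x) ∂μ := by
  let reflect := SchwartzMap.compCLMOfContinuousLinearEquiv ℝ (F := ℂ) (.neg ℝ : E ≃L[ℝ] E)
  have apply_reflect (f : 𝓢(E, ℂ)) (x : E) : τ y (reflect f) x = f (y - x) := by
    rw [← neg_sub]; rfl
  have h := SchwartzMap.integral_mul_lineDerivOp_right_eq_neg_left (μ := μ) φ (τ y (reflect f)) v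
  have lineDeriv_reflect : ∂_{v} (τ y (reflect f)) = -τ y (reflect (∂_{v} f)) := by
    rw [lineDerivOp_compSubConstCLM, SchwartzMap.lineDerivOp_compCLMOfContinuousLinearEquiv]
    simp [reflect, LineDeriv.lineDerivOp_left_neg]
  simp only [lineDeriv_reflect, neg_apply, mul_neg, integral_neg, neg_inj, apply_reflect] at h
  exact h

lemma integral_mul_iteratedLineDerivOp_comp_sub {n : ℕ} (m : Fin n → E) (φ f : 𝓢(E, ℂ)) (y : E) :
    ∫ x, φ x * ∂^{m} f (y - x) ∂μ = ∫ x, f x * ∂^{m} φ (y - x) ∂μ := by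
  have h : ∫ x, φ x * ∂^{m} f (y - x) ∂μ = ∫ x, ∂^{m} φ x * f (y - x) ∂μ := by
    induction n generalizing φ with
    | zero => rfl
    | succ n ih =>
      rw [LineDeriv.iteratedLineDerivOp_succ_left, integral_mul_lineDerivOp_comp_sub, ih,
        iteratedLineDerivOp_lineDerivOp, ← LineDeriv.iteratedLineDerivOp_succ_left]
  rw [h, ← integral_sub_left_eq_self _ μ y]
  simp only [sub_sub_cancel, mul_comm]

lemma integrable_one_add_norm_pow_mul {F : Type*} [NormedAddCommGroup F] [NormedSpace ℝ F]
    (φ : 𝓢(E, F)) (k : ℕ) : Integrable (fun x => (1 + ‖x‖) ^ k * ‖φ x‖) μ := by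
  simp_rw [add_comm (1 : ℝ), add_pow, one_pow, mul_one, Finset.sum_mul]
  refine integrable_finsetSum _ fun m _ => ?_
  simp_rw [mul_right_comm _ _ (‖φ _‖)]
  exact (φ.integrable_pow_mul μ m).mul_const _

lemma integrable_smul_jet_compSubConstCLM {F : Type*} [NormedAddCommGroup F] [NormedSpace ℝ F]
    [NormedSpace ℂ F] [IsScalarTower ℝ ℂ F] (k n : ℕ) (φ : 𝓢(E, ℂ)) (f : 𝓢(E, F)) :
    Integrable (fun x => φ x • jet k n (τ x f)) μ := by
  refine ((integrable_one_add_norm_pow_mul μ φ k).mul_const ‖jet k n f‖).mono'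
    (φ.continuous.smul (contDiff_jet_compSubConstCLM k n f).continuous).aestronglyMeasurable
    (ae_of_all _ fun x => ?_)
  rw [norm_smul]
  calc ‖φ x‖ * ‖jet k n (τ x f)‖ ≤ ‖φ x‖ * ((1 + ‖x‖) ^ k * ‖jet k n f‖) := by
        gcongr; exact norm_jet_compSubConstCLM_le k n x f
    _ = _ := by ring

lemma integral_smul_jet_compSubConstCLM_apply (k n : ℕ) (φ f : 𝓢(E, ℂ)) (i : Fin (n + 1)) (y : E)
    (m : Fin i → E) : (∫ x, φ x • jet k n (τ x f) ∂μ) i y m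
      = ((1 + ‖y‖) ^ k : ℝ) • ∫ x, φ x * ∂^{m} f (y - x) ∂μ := by
  let eval : JetSpace E ℂ n →L[ℂ] E [×i]→L[ℝ] ℂ :=
    BoundedContinuousFunction.evalCLM ℂ y ∘L
      .proj (φ := fun i : Fin (n + 1) => E →ᵇ (E [×i]→L[ℝ] ℂ)) i
  have eval_jet (f : 𝓢(E, ℂ)) : eval (jet k n f) m = ((1 + ‖y‖) ^ k : ℝ) • ∂^{m} f y :=
    jet_apply_apply f i y m
  have hint := integrable_smul_jet_compSubConstCLM μ k n φ f
  calc (∫ x, φ x • jet k n (τ x f) ∂μ) i y m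
      = (∫ x, eval (φ x • jet k n (τ x f)) ∂μ) m :=
        congrArg (· m) (eval.integral_comp_comm hint).symm
    _ = ∫ x, eval (φ x • jet k n (τ x f)) m ∂μ :=
        ContinuousMultilinearMap.integral_apply (eval.integrable_comp hint) m
    _ = ∫ x, ((1 + ‖y‖) ^ k : ℝ) • (φ x * ∂^{m} f (y - x)) ∂μ := by
        simp only [map_smul, smul_apply, eval_jet,
          iteratedLineDerivOp_compSubConstCLM, SchwartzMap.compSubConstCLM_apply,
          smul_comm (φ _), smul_eq_mul]
    _ = _ := integral_smul _ _

lemma integral_smul_jet_compSubConstCLM_comm (k n : ℕ) (φ f : 𝓢(E, ℂ)) :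
    ∫ x, φ x • jet k n (τ x f) ∂μ = ∫ x, f x • jet k n (τ x φ) ∂μ := by
  refine funext fun i => BoundedContinuousFunction.ext fun y =>
    ContinuousMultilinearMap.ext fun m => ?_
  rw [integral_smul_jet_compSubConstCLM_apply, integral_smul_jet_compSubConstCLM_apply,
    integral_mul_iteratedLineDerivOp_comp_sub]

lemma integral_mul_apply_compSubConstCLM_comm (u : 𝓢(E, ℂ) →L[ℂ] ℂ) (φ f : 𝓢(E, ℂ)) :
    ∫ x, φ x * u (τ x f) ∂μ = ∫ x, f x * u (τ x φ) ∂μ := by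
  obtain ⟨k, n, U, hU⟩ := exists_continuousLinearMap_jet_eq u
  have integral_eq (φ f : 𝓢(E, ℂ)) :
      ∫ x, φ x * u (τ x f) ∂μ = U (∫ x, φ x • jet k n (τ x f) ∂μ) := by
    rw [← U.integral_comp_comm (integrable_smul_jet_compSubConstCLM μ k n φ f)]
    simp only [map_smul, hU, smul_eq_mul]
  rw [integral_eq, integral_eq, integral_smul_jet_compSubConstCLM_comm]

end Convolution

section Limits

variable {E : Type*} [NormedAddCommGroup E] [NormedSpace ℝ E] [FiniteDimensional ℝ E]
  [MeasurableSpace E] [BorelSpace E] (μ : Measure E) [μ.IsAddHaarMeasure]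

lemma integral_scaledReflection_smul {G : Type*} [NormedAddCommGroup G] [NormedSpace ℂ G]
    (ρ : 𝓢(E, ℂ)) (γ : E → G) {t : ℝ} (ht : 0 < t) :
    ∫ z, scaledReflection ρ t z • γ z ∂μ = ∫ w, ρ w • γ (-t • w) ∂μ := by
  have h := Measure.integral_comp_smul μ (fun w => ρ w • γ (-t • w)) (-t⁻¹)
  have abs_eq : |((-t⁻¹) ^ Module.finrank ℝ E)⁻¹| = t ^ Module.finrank ℝ E := by
    simp [abs_inv, abs_pow, abs_of_pos ht]
  simp only [smul_smul, neg_mul_neg, mul_inv_cancel₀ ht.ne', one_smul, abs_eq] at h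
  simp only [scaledReflection_apply ρ ht.ne', smul_assoc, integral_smul, h, zpow_neg, zpow_natCast]
  rw [inv_smul_smul₀ (by positivity)]

lemma tendsto_integral_smul_comp_smul {G : Type*} [NormedAddCommGroup G] [NormedSpace ℂ G]
    [CompleteSpace G] (φ : 𝓢(E, ℂ)) {γ : E → G} (hγ : Continuous γ) {k : ℕ} {C : ℝ}
    (hC : ∀ x, ‖γ x‖ ≤ C * (1 + ‖x‖) ^ k) :
    Tendsto (fun t : ℝ => ∫ x, φ x • γ (t • x) ∂μ) (𝓝 0) (𝓝 ((∫ x, φ x ∂μ) • γ 0)) := by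
  have hC0 : 0 ≤ C := by simpa using (norm_nonneg _).trans (hC 0)
  rw [← integral_smul_const]
  refine tendsto_integral_filter_of_dominated_convergence (fun x => C * ((1 + ‖x‖) ^ k * ‖φ x‖))
    (.of_forall fun t => by fun_prop) ?_
    ((integrable_one_add_norm_pow_mul μ φ k).const_mul C) (ae_of_all _ fun x => ?_)
  · filter_upwards [Metric.closedBall_mem_nhds (0 : ℝ) one_pos] with t ht
    rw [mem_closedBall_zero_iff] at ht
    refine ae_of_all _ fun x => ?_
    have htx : ‖t • x‖ ≤ ‖x‖ := by
      rw [norm_smul]; exact mul_le_of_le_one_left (norm_nonneg x) ht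
    calc ‖φ x • γ (t • x)‖ ≤ ‖φ x‖ * (C * (1 + ‖t • x‖) ^ k) := by
          rw [norm_smul]; gcongr; exact hC _
      _ ≤ ‖φ x‖ * (C * (1 + ‖x‖) ^ k) := by gcongr
      _ = _ := by ring
  · have h : Continuous fun t : ℝ => φ x • γ (t • x) := by fun_prop
    simpa using h.tendsto 0

lemma tendsto_integral_mul_regularization (u : 𝓢(E, ℂ) →L[ℂ] ℂ) (ρ φ : 𝓢(E, ℂ)) :
    Tendsto (fun t => ∫ x, φ x * regularization u ρ t x ∂μ) (𝓝[>] 0)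
      (𝓝 ((∫ x, ρ x ∂μ) * u φ)) := by
  obtain ⟨k, n, C, -, hu⟩ := exists_norm_iteratedFDeriv_apply_compSubConstCLM_le u
  have growth (x : E) : ‖u (τ x φ)‖ ≤ C * ‖jet k n φ‖ * (1 + ‖x‖) ^ k := by
    simpa [mul_comm] using hu 0 φ x
  have h := tendsto_integral_smul_comp_smul μ ρ (contDiff_apply_compSubConstCLM u φ).continuous
    growth
  rw [SchwartzMap.compSubConstCLM_zero] at h
  have tendsto_neg : Tendsto (fun t : ℝ => -t) (𝓝[>] 0) (𝓝 0) :=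
    (continuous_neg.tendsto' 0 0 neg_zero).mono_left nhdsWithin_le_nhds
  refine (h.comp tendsto_neg).congr' ?_
  filter_upwards [self_mem_nhdsWithin] with t ht
  exact (integral_scaledReflection_smul μ ρ (fun x => u (τ x φ)) ht).symm.trans
    (integral_mul_apply_compSubConstCLM_comm μ u φ (scaledReflection ρ t)).symm

lemma IsNtauNet.tendsto_integral_mul {f : ℝ → E → ℂ} (hf : IsNtauNet f) (φ : 𝓢(E, ℂ)) :
    Tendsto (fun ε => ∫ x, φ x * f ε x ∂μ) (𝓝[>] 0) (𝓝 0) := by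
  obtain ⟨q, hq⟩ := hf.2 0
  obtain ⟨C, hC, η, hη, hmu⟩ := hq 1
  let A := ∫ x, (1 + ‖x‖) ^ q * ‖φ x‖ ∂μ
  have norm_integral_le : ∀ᶠ ε in 𝓝[>] 0, ‖∫ x, φ x * f ε x ∂μ‖ ≤ A * (C * ε) := by
    filter_upwards [Ioc_mem_nhdsGT hη] with ε hε
    have hfε := norm_le_of_mu_neg_le (mul_nonneg hC.le (pow_nonneg hε.1.le 1)) (hmu ε hε.1 hε.2)
    rw [← integral_mul_const]
    refine norm_integral_le_of_norm_le ((integrable_one_add_norm_pow_mul μ φ q).mul_const _)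
      (ae_of_all _ fun x => ?_)
    calc ‖φ x * f ε x‖ ≤ ‖φ x‖ * ((1 + ‖x‖) ^ q * (C * ε ^ 1)) := by
          rw [norm_mul]; gcongr; exact hfε x
      _ = _ := by ring
  have tendsto_bound : Tendsto (fun ε => A * (C * ε)) (𝓝[>] 0) (𝓝 0) :=
    (Continuous.tendsto' (by fun_prop) 0 0 (by simp)).mono_left nhdsWithin_le_nhds
  exact squeeze_zero_norm' norm_integral_le tendsto_bound

end Limits

theorem stmt2_general {E : Type*} [NormedAddCommGroup E] [NormedSpace ℝ E] [FiniteDimensional ℝ E]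
    [MeasurableSpace E] [BorelSpace E] (μ : Measure E) [μ.IsAddHaarMeasure]
    (u : 𝓢(E, ℂ) →L[ℂ] ℂ) (ρ : 𝓢(E, ℂ)) (hρ : ∫ x, ρ x ∂μ ≠ 0) (uε : ℝ → E → ℂ)
    (huε : ∀ ε ∈ Set.Ioc (0 : ℝ) 1, ∀ x, ∀ g : 𝓢(E, ℂ),
      (∀ y, g y = ((ε ^ (-(Module.finrank ℝ E : ℤ)) : ℝ) : ℂ) * ρ (ε⁻¹ • (x - y))) →
        uε ε x = u g) :
    IsEtauNet uε ∧ (IsNtauNet uε → u = 0) := by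
  have eqOn_regularization : Set.EqOn (regularization u ρ) uε (Set.Ioc 0 1) := fun ε hε =>
    funext fun x => .symm <| huε ε hε x _ fun y => by
      rw [SchwartzMap.compSubConstCLM_apply, scaledReflection_apply ρ hε.1.ne', neg_smul,
        ← smul_neg, neg_sub, Complex.real_smul]
  refine ⟨(isEtauNet_regularization u ρ).congr eqOn_regularization, fun hN => ?_⟩
  ext φ
  have tendsto_zero : Tendsto (fun ε => ∫ x, φ x * regularization u ρ ε x ∂μ) (𝓝[>] 0) (𝓝 0) := by
    refine (hN.tendsto_integral_mul μ φ).congr' ?_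
    filter_upwards [Ioc_mem_nhdsGT one_pos] with ε hε
    rw [eqOn_regularization hε]
  have h := tendsto_nhds_unique (tendsto_integral_mul_regularization μ u ρ φ) tendsto_zero
  exact (mul_eq_zero.1 h).resolve_left hρ

/-- the regularization net of a tempered distribution belongs to `E_τ(ℝ^d)`
and the induced embedding `ι_τ : 𝓢'(ℝ^d) → G_τ(ℝ^d)` is injective. -/
theorem stmt2 (d : ℕ) (hd : 1 ≤ d)
    (u : SchwartzMap (Fin d → ℝ) ℂ →L[ℂ] ℂ)
    (ρ : SchwartzMap (Fin d → ℝ) ℂ) (hρ : IsMollifier ρ)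
    (uε : ℝ → (Fin d → ℝ) → ℂ)
    (huε : ∀ ε ∈ Set.Ioc (0:ℝ) 1, ∀ x : Fin d → ℝ, ∀ g : SchwartzMap (Fin d → ℝ) ℂ,
      (∀ y, g y = scaled ⇑ρ ε (x - y)) → uε ε x = u g) :
    IsEtauNet uε ∧ (IsNtauNet uε → u = 0) :=
  stmt2_general volume u ρ (by rw [hρ.1]; exact one_ne_zero) uε fun ε hε x g hg =>
    huε ε hε x g fun y => by rw [hg, Module.finrank_fin_fun, scaled]
end
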